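/- Fix integers m ≥ 1 and n ≥ 1 and a permutation σ ∈ S_n of cycle type λ = (λ_1,…,λ_ℓ). The number of labelled m-Tamari intervals of size n that are fixed under the action of σ equals (mn+1)^{ℓ−2} · ∏_{i=1}^{ℓ} binom((m+1)λ_i, λ_i), the equality being understood in ℚ (the exponent ℓ−2 may be negative). -/

import Mathlib

/-- A step of a lattice path: north or east. -/
inductive Step : Type
  | N : Step
  | E : Step
deriving DecidableEq

/-- Number of north steps of a path. -/
def northCount (w : List Step) : ℕ := (w.filter (fun s => s = Step.N)).length

/-- Number of east steps of a path. -/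
def eastCount (w : List Step) : ℕ := (w.filter (fun s => s = Step.E)).length

/-- `w` is an `m`-ballot path: it never goes below the line `x = m y`, and ends on it. -/
def IsBallot (m : ℕ) (w : List Step) : Prop :=
  (∀ k, eastCount (w.take k) ≤ m * northCount (w.take k)) ∧
    eastCount w = m * northCount w

/-- The covering relation of the `m`-Tamari order: `Q` covers `P` when `P` contains an
east step immediately followed by a north step `b`, and `Q` is obtained from `P` by
swapping the east step and `S`, where `S` is the shortest factor of `P` beginning with
`b` that is a (translated) `m`-ballot path. -/
def TamariCovers (m : ℕ) (P Q : List Step) : Prop :=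
  ∃ w₁ S w₂ : List Step,
    S ≠ [] ∧ S.head? = some Step.N ∧ IsBallot m S ∧
    (∀ k, 0 < k → k < S.length → ¬ IsBallot m (S.take k)) ∧
    P = w₁ ++ Step.E :: (S ++ w₂) ∧ Q = w₁ ++ S ++ Step.E :: w₂

/-- The `m`-Tamari order (reflexive–transitive closure of the covering relation). -/
def TamariLE (m : ℕ) : List Step → List Step → Prop :=
  Relation.ReflTransGen (TamariCovers m)

/-- `lab` is a labelling of the `n` north steps of `Q` by `1, …, n` (here, bijectively by
`Fin n`), increasing along each ascent: `lab i` is the position in `Q` of the north step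
labelled `i`. -/
def IsLabelling (n : ℕ) (Q : List Step) (lab : Fin n → ℕ) : Prop :=
  Function.Injective lab ∧ (∀ i, Q[lab i]? = some Step.N) ∧
    (∀ i j : Fin n, lab j = lab i + 1 → i < j)

/-- A labelled `m`-Tamari interval of size `n`: a pair of `m`-ballot paths of size `n`
with `P ≤ Q` in the `m`-Tamari order, together with a labelling of `Q`. -/
def IsLabelledTamariInterval (m n : ℕ)
    (x : (List Step × List Step) × (Fin n → ℕ)) : Prop :=
  IsBallot m x.1.1 ∧ northCount x.1.1 = n ∧
    IsBallot m x.1.2 ∧ northCount x.1.2 = n ∧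
    TamariLE m x.1.1 x.1.2 ∧ IsLabelling n x.1.2 x.2

/-- The cycles of a permutation, as the quotient by the `SameCycle` relation. -/
def Cycles {n : ℕ} (σ : Equiv.Perm (Fin n)) : Type :=
  Quotient (Equiv.Perm.SameCycle.setoid σ)

/-- The number of cycles of a permutation (fixed points count as cycles). -/
noncomputable def numCycles {n : ℕ} (σ : Equiv.Perm (Fin n)) : ℕ :=
  Nat.card (Cycles σ)

/-- The length of a cycle of a permutation. -/
noncomputable def cycleLen {n : ℕ} (σ : Equiv.Perm (Fin n)) (c : Cycles σ) : ℕ :=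
  Nat.card {i : Fin n // Quotient.mk (Equiv.Perm.SameCycle.setoid σ) i = c}

/-- Positions `a` and `b` belong to the same ascent (maximal run of north steps) of `Q`. -/
def SameAscent (Q : List Step) (a b : ℕ) : Prop :=
  ∀ r, min a b ≤ r → r ≤ max a b → Q[r]? = some Step.N

/-- A labelled interval is fixed by `σ` exactly when every cycle of `σ` is contained in
the label set of a single ascent of the upper path. -/
def FixedBy {n : ℕ} (x : (List Step × List Step) × (Fin n → ℕ))
    (σ : Equiv.Perm (Fin n)) : Prop :=
  ∀ i j : Fin n, σ.SameCycle i j → SameAscent x.1.2 (x.2 i) (x.2 j)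

/-!
A labelling of the upper path fixed by `σ` amounts to distributing the cycles of `σ` among the
ascents so that the lengths add up. Attach to each cycle `c`, of length `l c`, a square-zero
variable `x c`, and weight an ascent of length `a` by the coefficient of `X ^ a` in
`∏ c, (1 + x c * X ^ l c)`: the fixed labelled intervals are then counted by the multilinear
coefficient of the generating series of weighted intervals.

Cutting an interval where its upper path first returns to the line `x = m y`, with a catalytic
variable for the contacts of the lower path, shows that the coefficients of this series satisfy a
triangular system of quadratic equations, which has only one solution. A solution can also be built
in Laurent polynomials in `u`. With `θ = (1 + u) ^ (m + 1) / u ^ m`, the weight polynomial evaluated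
at `θ` has a Birkhoff factorization `H(θ) = G(u) * K(1 / u)`, explicit because the variables are
square-zero, and the equation satisfied by `η = (1 + 1 / u) * G(u)` over the polynomials in `θ` (its
coefficients come from a resultant) closes the system. The result is a product formula in the
implicitly defined series `z`, whose multilinear coefficient is extracted by an Abel-type identity.
-/

open Step

/-! ### Ballot paths and the Tamari order -/

section Counts

variable (v w : List Step)

@[simp] theorem northCount_nil : northCount [] = 0 := rfl

@[simp] theorem northCount_N_cons : northCount (N :: w) = northCount w + 1 := by simp [northCount]

@[simp] theorem northCount_E_cons : northCount (E :: w) = northCount w := by simp [northCount]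

@[simp] theorem northCount_append : northCount (v ++ w) = northCount v + northCount w := by
  simp [northCount]

@[simp] theorem eastCount_nil : eastCount [] = 0 := rfl

@[simp] theorem eastCount_N_cons : eastCount (N :: w) = eastCount w := by simp [eastCount]

@[simp] theorem eastCount_E_cons : eastCount (E :: w) = eastCount w + 1 := by simp [eastCount]

@[simp] theorem eastCount_append : eastCount (v ++ w) = eastCount v + eastCount w := by
  simp [eastCount]

theorem length_eq_northCount_add_eastCount : w.length = northCount w + eastCount w := by
  induction w with
  | nil => rfl
  | cons s w ih => cases s <;> simp [ih] <;> omega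

end Counts

/-- `IsRun m h w k`: reading a north step as a rise by `m` and an east step as a descent by `1`, the
word `w` leads from height `h` to height `k` without going below `0`. The `m`-ballot paths are the
runs from `0` to `0`; other heights are needed to cut ballot paths into pieces. -/
inductive IsRun (m : ℕ) : ℕ → List Step → ℕ → Prop
  | nil (h : ℕ) : IsRun m h [] h
  | north {h k : ℕ} {w : List Step} : IsRun m (h + m) w k → IsRun m h (N :: w) k
  | east {h k : ℕ} {w : List Step} : IsRun m h w k → IsRun m (h + 1) (E :: w) k

section Runs

variable {m h j k n : ℕ} {v w : List Step}

@[simp] theorem isRun_nil_iff : IsRun m h [] k ↔ h = k :=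
  ⟨fun r => by cases r; rfl, fun e => e ▸ .nil h⟩

@[simp] theorem isRun_N_cons_iff : IsRun m h (N :: w) k ↔ IsRun m (h + m) w k :=
  ⟨fun r => by cases r; assumption, .north⟩

@[simp] theorem isRun_succ_E_cons_iff : IsRun m (h + 1) (E :: w) k ↔ IsRun m h w k :=
  ⟨fun r => by cases r; assumption, .east⟩

@[simp] theorem not_isRun_zero_E_cons : ¬ IsRun m 0 (E :: w) k := nofun

theorem isRun_append_iff :
    IsRun m h (v ++ w) k ↔ ∃ j, IsRun m h v j ∧ IsRun m j w k := by
  induction v generalizing h with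
  | nil => simp
  | cons s v ih =>
    cases s with
    | N => simp [ih]
    | E => cases h <;> simp [ih]

theorem IsRun.append (hv : IsRun m h v j) (hw : IsRun m j w k) : IsRun m h (v ++ w) k :=
  isRun_append_iff.2 ⟨j, hv, hw⟩

theorem IsRun.height_eq (r : IsRun m h w k) : h + m * northCount w = k + eastCount w := by
  induction r with
  | nil => simp
  | north _ ih => simp only [northCount_N_cons, eastCount_N_cons, mul_add]; omega
  | east _ ih => simp only [northCount_E_cons, eastCount_E_cons]; omega

theorem IsRun.length_eq (r : IsRun m h w 0) : w.length = h + (m + 1) * northCount w := by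
  rw [length_eq_northCount_add_eastCount]
  linarith [r.height_eq]

theorem IsRun.eq_nil (r : IsRun m 0 w 0) (hw : northCount w = 0) : w = [] := by
  simpa [hw] using r.length_eq

theorem IsRun.add_right (r : IsRun m h w k) (d : ℕ) : IsRun m (h + d) w (k + d) := by
  induction r with
  | nil => simp
  | north _ ih => exact .north (by rwa [Nat.add_right_comm])
  | east _ ih => rw [Nat.add_right_comm]; exact ih.east

theorem IsRun.unique (r : IsRun m h w j) (r' : IsRun m h w k) : j = k := by
  have := r.height_eq
  have := r'.height_eq
  omega

theorem IsRun.of_append (r : IsRun m h (v ++ w) k) (hv : IsRun m h v j) : IsRun m j w k := by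
  obtain ⟨i, hi, hw⟩ := isRun_append_iff.1 r
  rwa [hv.unique hi]

theorem isRun_zero_iff :
    IsRun m h w 0 ↔ (∀ k, eastCount (w.take k) ≤ h + m * northCount (w.take k)) ∧
      eastCount w = h + m * northCount w := by
  induction w generalizing h with
  | nil => simp [eq_comm]
  | cons s w ih =>
    rw [← Nat.and_forall_add_one]
    cases s with
    | N => simp [ih, mul_add, add_comm m, add_assoc]
    | E =>
      cases h with
      | zero =>
        simp only [not_isRun_zero_E_cons, false_iff]
        rintro ⟨⟨-, H⟩, -⟩
        simpa using H 0
      | succ h => simp [ih, add_right_comm]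

theorem isBallot_iff_isRun : IsBallot m w ↔ IsRun m 0 w 0 := by
  simp [isRun_zero_iff, IsBallot]

theorem IsRun.exists_eq_N_cons (r : IsRun m 0 w 0) (hw : w ≠ []) : ∃ v, w = N :: v := by
  match w with
  | [] => exact absurd rfl hw
  | N :: v => exact ⟨v, rfl⟩
  | E :: v => exact absurd r not_isRun_zero_E_cons

theorem IsRun.exists_first_passage (r : IsRun m (h + 1) w 0) :
    ∃ u v, w = u ++ E :: v ∧ IsRun m h u 0 ∧ IsRun m 0 v 0 := by
  induction w generalizing h with
  | nil => simp at r
  | cons s w ih =>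
    cases s with
    | N =>
      rw [isRun_N_cons_iff, Nat.add_right_comm] at r
      obtain ⟨u, v, rfl, hu, hv⟩ := ih r
      exact ⟨N :: u, v, rfl, hu.north, hv⟩
    | E =>
      rw [isRun_succ_E_cons_iff] at r
      cases h with
      | zero => exact ⟨[], w, rfl, .nil 0, r⟩
      | succ h =>
        obtain ⟨u, v, rfl, hu, hv⟩ := ih r
        exact ⟨E :: u, v, rfl, hu.east, hv⟩

theorem IsRun.first_passage_unique {u u' v v' : List Step} (hu : IsRun m h u 0)
    (hu' : IsRun m h u' 0) (e : u ++ E :: v = u' ++ E :: v') : u = u' ∧ v = v' := by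
  induction u generalizing h u' with
  | nil =>
    obtain rfl := isRun_nil_iff.1 hu
    match u' with
    | [] => simpa using e
    | N :: _ => simp at e
    | E :: _ => exact absurd hu' not_isRun_zero_E_cons
  | cons s u ih =>
    cases u' with
    | nil =>
      obtain rfl := isRun_nil_iff.1 hu'
      cases s with
      | N => simp at e
      | E => exact absurd hu not_isRun_zero_E_cons
    | cons s' u' =>
      obtain ⟨rfl, e'⟩ : s = s' ∧ u ++ E :: v = u' ++ E :: v' := by simpa using e
      cases hu with
      | north hu => simpa using ih hu (isRun_N_cons_iff.1 hu') e'
      | east hu => simpa using ih hu (isRun_succ_E_cons_iff.1 hu') e'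

theorem IsRun.append_E_cons (hv : IsRun m h v 0) (hw : IsRun m 0 w 0) :
    IsRun m (h + 1) (v ++ E :: w) 0 :=
  (hv.add_right 1).append hw.east

end Runs

section Order

variable {m h : ℕ} {P Q : List Step}

theorem TamariCovers.append_append (c : TamariCovers m P Q) (u v : List Step) :
    TamariCovers m (u ++ P ++ v) (u ++ Q ++ v) := by
  obtain ⟨w₁, S, w₂, hne, hhead, hS, hmin, rfl, rfl⟩ := c
  exact ⟨u ++ w₁, S, w₂ ++ v, hne, hhead, hS, hmin, by simp, by simp⟩

theorem TamariCovers.append_left (c : TamariCovers m P Q) (u : List Step) :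
    TamariCovers m (u ++ P) (u ++ Q) := by
  simpa using c.append_append u []

theorem TamariCovers.append_right (c : TamariCovers m P Q) (v : List Step) :
    TamariCovers m (P ++ v) (Q ++ v) :=
  c.append_append [] v

theorem TamariLE.append_append (c : TamariLE m P Q) (u v : List Step) :
    TamariLE m (u ++ P ++ v) (u ++ Q ++ v) := by
  induction c with
  | refl => exact .refl
  | tail _ c ih => exact ih.tail (c.append_append u v)

theorem TamariCovers.northCount_eq (c : TamariCovers m P Q) : northCount P = northCount Q := by
  obtain ⟨w₁, S, w₂, -, -, -, -, rfl, rfl⟩ := c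
  simp

theorem TamariCovers.isRun (c : TamariCovers m P Q) (r : IsRun m h Q 0) : IsRun m h P 0 := by
  obtain ⟨w₁, S, w₂, -, -, hS, -, rfl, rfl⟩ := c
  rw [isBallot_iff_isRun] at hS
  obtain ⟨j, r₁₂, r₃⟩ := isRun_append_iff.1 r
  obtain ⟨i, r₁, r₂⟩ := isRun_append_iff.1 r₁₂
  obtain rfl : i = j := by simpa using (hS.add_right i).unique (by simpa using r₂)
  cases r₃ with
  | east r₃ => exact r₁.append (.east (IsRun.append (by simpa using hS.add_right _) r₃))

theorem TamariLE.northCount_eq (c : TamariLE m P Q) : northCount P = northCount Q := by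
  induction c with
  | refl => rfl
  | tail _ c ih => exact ih.trans c.northCount_eq

theorem TamariLE.isRun (c : TamariLE m P Q) (r : IsRun m h Q 0) : IsRun m h P 0 := by
  induction c with
  | refl => exact r
  | tail _ c ih => exact ih (c.isRun r)

theorem TamariCovers.exists_of_N_cons (c : TamariCovers m (N :: P) Q) :
    ∃ Q', Q = N :: Q' ∧ TamariCovers m P Q' := by
  obtain ⟨_ | ⟨s, w₁⟩, S, w₂, hne, hhead, hS, hmin, e, rfl⟩ := c
  · simp at e
  · obtain ⟨rfl, rfl⟩ : N = s ∧ P = w₁ ++ E :: (S ++ w₂) := by simpa using e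
    exact ⟨w₁ ++ S ++ E :: w₂, rfl, w₁, S, w₂, hne, hhead, hS, hmin, rfl, rfl⟩

theorem tamariLE_N_cons_iff : TamariLE m (N :: P) (N :: Q) ↔ TamariLE m P Q := by
  refine ⟨fun c => ?_, fun c => by simpa using c.append_append [N] []⟩
  suffices ∀ X, TamariLE m (N :: P) X → ∃ X', X = N :: X' ∧ TamariLE m P X' by
    obtain ⟨X, e, hX⟩ := this _ c
    rwa [List.tail_eq_of_cons_eq e]
  intro X hX
  induction hX with
  | refl => exact ⟨P, rfl, .refl⟩
  | tail _ c ih =>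
    obtain ⟨X, rfl, hX⟩ := ih
    obtain ⟨X', rfl, c'⟩ := TamariCovers.exists_of_N_cons c
    exact ⟨X', rfl, hX.tail c'⟩

theorem IsRun.exists_tamariCovers {w : List Step} (hw : w ≠ []) (r : IsRun m 0 w 0) :
    ∃ S v, w = S ++ v ∧ S ≠ [] ∧ IsRun m 0 S 0 ∧ TamariCovers m (E :: w) (S ++ E :: v) := by
  classical
  obtain ⟨w, rfl⟩ := r.exists_eq_N_cons hw
  have hex : ∃ k, 0 < k ∧ IsBallot m ((N :: w).take k) :=
    ⟨_, List.length_pos_of_ne_nil hw, by rwa [List.take_length, isBallot_iff_isRun]⟩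
  obtain ⟨k, ⟨hpos, hball⟩, hmin⟩ := Nat.findX hex
  obtain ⟨l, rfl⟩ := Nat.exists_eq_add_one_of_ne_zero hpos.ne'
  refine ⟨(N :: w).take (l + 1), (N :: w).drop (l + 1), by simp, by simp,
    isBallot_iff_isRun.1 hball, [], _, _, by simp, by simp, hball,
    fun i hi hil hi' => ?_, by simp, rfl⟩
  have hil : i < l + 1 := lt_of_lt_of_le hil (by simp)
  rw [List.take_take, min_eq_left hil.le] at hi'
  exact hmin i hil ⟨hi, hi'⟩

theorem IsRun.tamariLE_E_cons {B : List Step} (hB : IsRun m 0 B 0) :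
    TamariLE m (E :: B) (B ++ [E]) := by
  induction hl : B.length using Nat.strong_induction_on generalizing B with
  | _ l ih =>
  by_cases hne : B = []
  · subst hne
    exact .refl
  obtain ⟨S, v, rfl, hS, hrS, c⟩ := hB.exists_tamariCovers hne
  have hv : TamariLE m (E :: v) (v ++ [E]) := by
    refine ih _ ?_ (hB.of_append hrS) rfl
    rw [← hl, List.length_append]
    exact Nat.lt_add_of_pos_left (List.length_pos_of_ne_nil hS)
  have hSv : TamariLE m (S ++ E :: v) (S ++ v ++ [E]) := by simpa using hv.append_append S []
  exact hSv.head c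

theorem TamariLE.join {A B C Q₁ Q₂ : List Step} (hB : IsRun m 0 B 0)
    (c₁ : TamariLE m (A ++ B) Q₁) (c₂ : TamariLE m C Q₂) :
    TamariLE m (A ++ E :: (B ++ C)) (Q₁ ++ E :: Q₂) := by
  have slide : TamariLE m (A ++ E :: (B ++ C)) (A ++ B ++ E :: C) := by
    simpa using hB.tamariLE_E_cons.append_append A C
  have left : TamariLE m (A ++ B ++ E :: C) (Q₁ ++ E :: C) := by
    simpa using c₁.append_append [] (E :: C)
  have right : TamariLE m (Q₁ ++ E :: C) (Q₁ ++ E :: Q₂) := by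
    simpa using c₂.append_append (Q₁ ++ [E]) []
  exact (slide.trans left).trans right

/-- The ballot word `S` cannot end inside `b`, since `b` ends strictly above its start. -/
theorem IsRun.exists_eq_append_of_append_eq {j : ℕ} {w S x b : List Step} (hS : IsRun m 0 S 0)
    (hb : IsRun m 0 b (j + 1)) (e : w ++ S = x ++ b) : ∃ b', b = b' ++ S ∧ w = x ++ b' := by
  rcases List.append_eq_append_iff.1 e with ⟨z, -, rfl⟩ | ⟨z, hw, hb'⟩
  · obtain ⟨i, -, r⟩ := isRun_append_iff.1 hS
    have := r.height_eq
    have := hb.height_eq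
    omega
  · exact ⟨z, hb', hw⟩

theorem TamariCovers.of_append_isRun {X Y : List Step} (c : TamariCovers m P (X ++ Y))
    (hY : IsRun m 0 Y 0) :
    (∃ X', P = X' ++ Y ∧ TamariCovers m X' X) ∨ ∃ Y', P = X ++ Y' ∧ TamariCovers m Y' Y := by
  obtain ⟨w₁, S, w₂, hne, hhead, hS, hmin, rfl, e⟩ := c
  have cover (u v : List Step) : TamariCovers m (u ++ E :: (S ++ v)) (u ++ S ++ E :: v) :=
    ⟨u, S, v, hne, hhead, hS, hmin, rfl, rfl⟩
  rcases List.append_eq_append_iff.1 e with ⟨z, e, rfl⟩ | ⟨z, rfl, e'⟩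
  · obtain ⟨i, hz, hEw₂⟩ := isRun_append_iff.1 hY
    cases hEw₂ with
    | east hw₂ =>
      replace e : w₁ ++ S = X ++ z := by simpa [← List.append_assoc] using e.symm
      obtain ⟨b, rfl, rfl⟩ := (isBallot_iff_isRun.1 hS).exists_eq_append_of_append_eq hz e
      exact .inr ⟨b ++ E :: (S ++ w₂), by simp, cover b w₂⟩
  · match z with
    | [] =>
      obtain rfl : E :: w₂ = Y := e'
      exact absurd hY not_isRun_zero_E_cons
    | s :: z =>
      obtain ⟨rfl, rfl⟩ : E = s ∧ w₂ = z ++ Y := List.cons.inj e'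
      exact .inl ⟨w₁ ++ E :: (S ++ z), by simp, cover w₁ z⟩

theorem TamariCovers.of_append_E {A : List Step} (c : TamariCovers m P (A ++ [E])) :
    (∃ A' S, A = A' ++ S ∧ IsRun m 0 S 0 ∧ P = A' ++ E :: S) ∨
      ∃ A', P = A' ++ [E] ∧ TamariCovers m A' A := by
  obtain ⟨w₁, S, w₂, hne, hhead, hS, hmin, rfl, e⟩ := c
  rcases List.eq_nil_or_concat' w₂ with rfl | ⟨z, s, rfl⟩
  · obtain rfl : A = w₁ ++ S := by simpa [← List.append_assoc] using e
    exact .inl ⟨w₁, S, rfl, isBallot_iff_isRun.1 hS, by simp⟩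
  · rw [← List.cons_append, ← List.append_assoc] at e
    obtain ⟨rfl, rfl⟩ : A = w₁ ++ S ++ E :: z ∧ E = s := by
      simpa using List.append_inj' e rfl
    exact .inr ⟨w₁ ++ E :: (S ++ z), by simp, w₁, S, z, hne, hhead, hS, hmin, rfl, rfl⟩

theorem TamariCovers.split {A B C : List Step} (c : TamariCovers m P (A ++ E :: (B ++ C)))
    (hA : IsRun m h A 0) (hB : IsRun m 0 B 0) (hC : IsRun m 0 C 0) :
    ∃ A' B' C', P = A' ++ E :: (B' ++ C') ∧ IsRun m h A' 0 ∧ IsRun m 0 B' 0 ∧ IsRun m 0 C' 0 ∧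
      TamariLE m (A' ++ B') (A ++ B) ∧ TamariLE m C' C := by
  rw [← List.cons_append, ← List.append_assoc] at c
  rcases c.of_append_isRun hC with ⟨X, rfl, cX⟩ | ⟨C', rfl, cC⟩
  · rw [List.append_cons] at cX
    rcases cX.of_append_isRun hB with ⟨Y, rfl, cY⟩ | ⟨B', rfl, cB⟩
    · rcases cY.of_append_E with ⟨A', S, rfl, hS, rfl⟩ | ⟨A', rfl, cA⟩
      · obtain ⟨i, hA', hS'⟩ := isRun_append_iff.1 hA
        obtain rfl : i = 0 := by simpa using (hS.add_right i).unique (by simpa using hS')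
        exact ⟨A', S ++ B, C, by simp, hA', hS.append hB, hC,
          by rw [List.append_assoc]; exact .refl, .refl⟩
      · exact ⟨A', B, C, by simp, cA.isRun hA, hB, hC, .single (cA.append_right B), .refl⟩
    · exact ⟨A, B', C, by simp, hA, cB.isRun hB, hC, .single (cB.append_left A), .refl⟩
  · exact ⟨A, B, C', by simp, hA, hB, cC.isRun hC, .refl, .single cC⟩

theorem TamariLE.exists_join {Q₁ Q₂ : List Step} (c : TamariLE m P (Q₁ ++ E :: Q₂))
    (r₁ : IsRun m h Q₁ 0) (r₂ : IsRun m 0 Q₂ 0) :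
    ∃ A B C, P = A ++ E :: (B ++ C) ∧ IsRun m h A 0 ∧ IsRun m 0 B 0 ∧ IsRun m 0 C 0 ∧
      TamariLE m (A ++ B) Q₁ ∧ TamariLE m C Q₂ := by
  induction c using Relation.ReflTransGen.head_induction_on with
  | refl => exact ⟨Q₁, [], Q₂, rfl, r₁, .nil 0, r₂, by rw [List.append_nil]; exact .refl, .refl⟩
  | head c _ ih =>
    obtain ⟨A, B, C, rfl, hA, hB, hC, c₁, c₂⟩ := ih
    obtain ⟨A', B', C', rfl, hA', hB', hC', c₁', c₂'⟩ := c.split hA hB hC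
    exact ⟨A', B', C', rfl, hA', hB', hC', c₁'.trans c₁, c₂'.trans c₂⟩

end Order

/-! ### Decomposition of intervals -/

section Contacts

open Finset Polynomial

open Classical in
/-- The contacts of a run: the positions, including the two ends, at which the word `w` read from
height `h` is at height `0`. -/
noncomputable def contacts (m h : ℕ) (w : List Step) : Finset ℕ :=
  {k ∈ range (w.length + 1) | IsRun m h (w.take k) 0}

variable {m h j k : ℕ} {w A B C : List Step}

theorem mem_contacts : k ∈ contacts m h w ↔ k ≤ w.length ∧ IsRun m h (w.take k) 0 := by
  simp [contacts]

section Sum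

variable {M : Type*} [AddCommMonoid M] (f : ℕ → M)

theorem sum_contacts_nil : ∑ k ∈ contacts m h [], f k = if h = 0 then f 0 else 0 := by
  rw [contacts, sum_filter]
  simp

theorem sum_contacts_N_cons :
    ∑ k ∈ contacts m h (N :: w), f k =
      (if h = 0 then f 0 else 0) + ∑ k ∈ contacts m (h + m) w, f (k + 1) := by
  classical
  simp only [contacts, sum_filter, List.length_cons]
  rw [sum_range_succ', add_comm]
  exact congr_arg₂ _ (if_congr (by simp) rfl rfl)
    (sum_congr rfl fun k _ => if_congr (by simp) rfl rfl)

theorem sum_contacts_E_cons :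
    ∑ k ∈ contacts m (h + 1) (E :: w), f k = ∑ k ∈ contacts m h w, f (k + 1) := by
  classical
  simp only [contacts, sum_filter, List.length_cons]
  rw [sum_range_succ', if_neg (by simp), add_zero]
  exact sum_congr rfl fun k _ => if_congr (by simp) rfl rfl

end Sum

theorem card_contacts_nil : #(contacts m h []) = if h = 0 then 1 else 0 := by
  simp only [card_eq_sum_ones, sum_contacts_nil]

theorem card_contacts_N_cons :
    #(contacts m h (N :: w)) = (if h = 0 then 1 else 0) + #(contacts m (h + m) w) := by
  simp only [card_eq_sum_ones, sum_contacts_N_cons]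

theorem card_contacts_E_cons : #(contacts m (h + 1) (E :: w)) = #(contacts m h w) := by
  simp only [card_eq_sum_ones, sum_contacts_E_cons]

theorem card_contacts_append (r : IsRun m h A j) :
    #(contacts m h (A ++ B)) + (if j = 0 then 1 else 0) =
      #(contacts m h A) + #(contacts m j B) := by
  induction r with
  | nil => rw [List.nil_append, card_contacts_nil, add_comm]
  | north _ ih => rw [List.cons_append, card_contacts_N_cons, card_contacts_N_cons]; omega
  | east _ ih => rw [List.cons_append, card_contacts_E_cons, card_contacts_E_cons]; omega

theorem contacts_succ_eq_empty (r : IsRun m h w j) : contacts m (h + 1) w = ∅ := by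
  refine eq_empty_of_forall_notMem fun k hk => ?_
  rw [← List.take_append_drop k w] at r
  obtain ⟨i, hi, -⟩ := isRun_append_iff.1 r
  exact absurd ((hi.add_right 1).unique (mem_contacts.1 hk).2) (by simp)

theorem card_contacts_zero_pos (m : ℕ) (w : List Step) : 0 < #(contacts m 0 w) :=
  card_pos.2 ⟨0, mem_contacts.2 ⟨zero_le, .nil 0⟩⟩

theorem card_contacts_join (hA : IsRun m h A 0) (hB : IsRun m 0 B 0) :
    #(contacts m (h + 1) (A ++ E :: (B ++ C))) =
      (#(contacts m 0 B) - 1) + #(contacts m 0 C) := by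
  have split_E := card_contacts_append (B := E :: (B ++ C)) (hA.add_right 1)
  have split_B := card_contacts_append (B := C) hB
  have := card_contacts_zero_pos m B
  rw [contacts_succ_eq_empty hA, card_contacts_E_cons] at split_E
  simp only [zero_add, one_ne_zero, ↓reduceIte, add_zero, card_empty] at split_E split_B
  omega

theorem divX_one_add_X_mul {R : Type*} [Semiring R] (p : R[X]) :
    divX ((1 + X) * p) = p + divX p := by
  ext n
  simp [add_mul, coeff_divX, coeff_X_mul, add_comm]

theorem divX_one_add_X_pow_card_contacts {R : Type*} [Semiring R] (r : IsRun m h w j) :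
    divX ((1 + X : R[X]) ^ #(contacts m h w)) =
      ∑ k ∈ contacts m h w, (1 + X : R[X]) ^ (#(contacts m 0 (w.drop k)) - 1) := by
  induction r with
  | nil h =>
    have : divX (1 + X : R[X]) = 1 := by simpa using divX_one_add_X_mul (1 : R[X])
    rw [sum_contacts_nil, card_contacts_nil]
    split_ifs <;> simp [card_contacts_nil, this]
  | @north h _ w _ ih =>
    rw [sum_contacts_N_cons, card_contacts_N_cons]
    by_cases h0 : h = 0
    · subst h0
      rw [zero_add] at ih
      simp [pow_add, divX_one_add_X_mul, ih, card_contacts_N_cons]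
    · simp [h0, ih]
  | east _ ih => rw [sum_contacts_E_cons, card_contacts_E_cons, ih]; simp

end Contacts

section Intervals

open Finset

variable {m h i j k n : ℕ} {x x' y y' : List Step × List Step}

instance : Finite Step :=
  Finite.of_injective (fun s => decide (s = N)) (by intro a b; cases a <;> cases b <;> simp)

theorem finite_intervals (m h n : ℕ) : {x : List Step × List Step |
    IsRun m h x.2 0 ∧ northCount x.2 = n ∧ TamariLE m x.1 x.2}.Finite := by
  refine ((List.finite_length_eq Step (h + (m + 1) * n)).prod
    (List.finite_length_eq Step (h + (m + 1) * n))).subset ?_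
  rintro ⟨P, Q⟩ ⟨r, rfl, c⟩
  exact ⟨by simpa [c.northCount_eq] using (c.isRun r).length_eq, r.length_eq⟩

/-- The intervals `[P, Q]` for the `m`-Tamari order between runs from height `h` to `0` with `n`
north steps; the `m`-Tamari intervals of size `n` are obtained for `h = 0`. -/
noncomputable def intervals (m h n : ℕ) : Finset (List Step × List Step) :=
  (finite_intervals m h n).toFinset

theorem mem_intervals :
    x ∈ intervals m h n ↔ IsRun m h x.2 0 ∧ northCount x.2 = n ∧ TamariLE m x.1 x.2 := by
  simp [intervals]

theorem isRun_fst_of_mem_intervals (hx : x ∈ intervals m h n) : IsRun m h x.1 0 :=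
  (mem_intervals.1 hx).2.2.isRun (mem_intervals.1 hx).1

theorem northCount_fst_of_mem_intervals (hx : x ∈ intervals m h n) : northCount x.1 = n :=
  (mem_intervals.1 hx).2.2.northCount_eq.trans (mem_intervals.1 hx).2.1

theorem intervals_zero_zero (m : ℕ) : intervals m 0 0 = {([], [])} := by
  ext ⟨P, Q⟩
  rw [mem_singleton, Prod.mk.injEq]
  refine ⟨fun hx => ?_, ?_⟩
  · obtain ⟨r, hn, -⟩ := mem_intervals.1 hx
    exact ⟨(isRun_fst_of_mem_intervals hx).eq_nil (northCount_fst_of_mem_intervals hx),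
      r.eq_nil hn⟩
  · rintro ⟨rfl, rfl⟩
    exact mem_intervals.2 ⟨.nil 0, rfl, .refl⟩

theorem mem_intervals_zero_succ :
    x ∈ intervals m 0 (n + 1) ↔ ∃ y ∈ intervals m m n, (N :: y.1, N :: y.2) = x := by
  obtain ⟨P, Q⟩ := x
  constructor
  · intro hx
    obtain ⟨r, hn, c⟩ := mem_intervals.1 hx
    have hP := northCount_fst_of_mem_intervals hx
    obtain ⟨P, rfl⟩ := (isRun_fst_of_mem_intervals hx).exists_eq_N_cons (by rintro rfl; simp at hP)
    obtain ⟨Q, rfl⟩ := r.exists_eq_N_cons (by rintro rfl; simp at hn)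
    exact ⟨(P, Q), mem_intervals.2 ⟨by simpa using r, by simpa using hn,
      tamariLE_N_cons_iff.1 c⟩, rfl⟩
  · rintro ⟨⟨P, Q⟩, hy, e⟩
    obtain ⟨rfl, rfl⟩ := Prod.mk.inj e
    obtain ⟨r, rfl, c⟩ := mem_intervals.1 hy
    exact mem_intervals.2 ⟨by simpa using r, by simp, tamariLE_N_cons_iff.2 c⟩

/-- The interval obtained by inserting, at the contact `k` of the lower path of `x` and at the end
of its upper path, an east step, and by appending the interval `y`. -/
def joinAt (x : List Step × List Step) (k : ℕ) (y : List Step × List Step) :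
    List Step × List Step :=
  (x.1.take k ++ E :: (x.1.drop k ++ y.1), x.2 ++ E :: y.2)

theorem isRun_drop_of_mem_contacts (hx : x ∈ intervals m h i) (hk : k ∈ contacts m h x.1) :
    IsRun m 0 (x.1.drop k) 0 :=
  IsRun.of_append (by simpa using isRun_fst_of_mem_intervals hx) (mem_contacts.1 hk).2

theorem joinAt_mem_intervals (hx : x ∈ intervals m h i) (hk : k ∈ contacts m h x.1)
    (hy : y ∈ intervals m 0 j) : joinAt x k y ∈ intervals m (h + 1) (i + j) := by
  obtain ⟨rx, rfl, cx⟩ := mem_intervals.1 hx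
  obtain ⟨ry, rfl, cy⟩ := mem_intervals.1 hy
  exact mem_intervals.2 ⟨rx.append_E_cons ry, by simp [joinAt],
    .join (isRun_drop_of_mem_contacts hx hk) (by simpa using cx) cy⟩

theorem exists_joinAt_of_mem_intervals (hx : x ∈ intervals m (h + 1) n) :
    ∃ i j, i + j = n ∧ ∃ y ∈ intervals m h i, ∃ k ∈ contacts m h y.1, ∃ z ∈ intervals m 0 j,
      joinAt y k z = x := by
  obtain ⟨P, Q⟩ := x
  obtain ⟨r, rfl, c⟩ := mem_intervals.1 hx
  obtain ⟨Q₁, Q₂, rfl, r₁, r₂⟩ := r.exists_first_passage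
  obtain ⟨A, B, C, rfl, hA, -, -, c₁, c₂⟩ := c.exists_join r₁ r₂
  exact ⟨_, _, by simp, (A ++ B, Q₁), mem_intervals.2 ⟨r₁, rfl, c₁⟩, A.length,
    mem_contacts.2 ⟨by simp, by simpa using hA⟩, (C, Q₂), mem_intervals.2 ⟨r₂, rfl, c₂⟩,
    by simp [joinAt]⟩

theorem joinAt_inj {i' k' : ℕ} (hx : x ∈ intervals m h i) (hk : k ∈ contacts m h x.1)
    (hx' : x' ∈ intervals m h i') (hk' : k' ∈ contacts m h x'.1)
    (e : joinAt x k y = joinAt x' k' y') : x = x' ∧ k = k' ∧ y = y' := by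
  obtain ⟨lower, upper⟩ := Prod.mk.inj e
  obtain ⟨hx₂, hy₂⟩ := (mem_intervals.1 hx).1.first_passage_unique (mem_intervals.1 hx').1 upper
  obtain ⟨hkle, rk⟩ := mem_contacts.1 hk
  obtain ⟨hkle', rk'⟩ := mem_contacts.1 hk'
  obtain ⟨htake, hrest⟩ := rk.first_passage_unique rk' lower
  have northCount_eq : northCount x.1 = northCount x'.1 := by
    rw [(mem_intervals.1 hx).2.2.northCount_eq, (mem_intervals.1 hx').2.2.northCount_eq, hx₂]
  have length_eq : x.1.length = x'.1.length := by
    rw [(isRun_fst_of_mem_intervals hx).length_eq, (isRun_fst_of_mem_intervals hx').length_eq,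
      northCount_eq]
  obtain rfl : k = k' := by simpa [hkle, hkle'] using congrArg List.length htake
  obtain ⟨hdrop, hy₁⟩ := List.append_inj hrest (by simp [length_eq])
  refine ⟨Prod.ext ?_ hx₂, rfl, Prod.ext hy₁ hy₂⟩
  rw [← List.take_append_drop k x.1, htake, hdrop, List.take_append_drop]

end Intervals

section IntervalPoly

open Polynomial Finset

/-- The product of `g a` over the lengths `a` of the ascents of a word, where a (possibly empty)
ascent ends before each east step and at the end of the word, and where the first ascent is preceded
by `r` further north steps. -/
def ascentProd {M : Type*} [Mul M] (g : ℕ → M) : ℕ → List Step → M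
  | r, [] => g r
  | r, N :: w => ascentProd g (r + 1) w
  | r, E :: w => g r * ascentProd g 0 w

theorem ascentProd_append_E_cons {M : Type*} [Semigroup M] (g : ℕ → M) (r : ℕ)
    (v w : List Step) : ascentProd g r (v ++ E :: w) = ascentProd g r v * ascentProd g 0 w := by
  induction v generalizing r with
  | nil => rfl
  | cons s v ih => cases s <;> simp only [List.cons_append, ascentProd, ih, mul_assoc]

variable {R : Type*} [CommSemiring R] (g : ℕ → R) (m h r n : ℕ)

/-- The generating polynomial of `intervals m h n`: each ascent of length `a` of the upper path has
weight `g a`, the first of them being lengthened by `r`, and each contact of the lower path has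
weight `1 + X`. -/
noncomputable def intervalPoly : R[X] :=
  ∑ x ∈ intervals m h n, C (ascentProd g r x.2) * (1 + X) ^ #(contacts m h x.1)

theorem intervalPoly_zero_zero : intervalPoly g m 0 r 0 = C (g r) * (1 + X) := by
  simp [intervalPoly, intervals_zero_zero, ascentProd, card_contacts_nil]

theorem intervalPoly_zero_succ :
    intervalPoly g m 0 r (n + 1) = (1 + X) * intervalPoly g m m (r + 1) n := by
  rw [intervalPoly, intervalPoly, mul_sum]
  refine (sum_bij (fun x _ => (N :: x.1, N :: x.2))
    (fun x hx => mem_intervals_zero_succ.2 ⟨x, hx, rfl⟩) (by simp +contextual)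
    (fun y hy => by simpa using mem_intervals_zero_succ.1 hy) fun x _ => ?_).symm
  simp only [ascentProd, card_contacts_N_cons, if_true, zero_add, pow_add, pow_one]
  ring

theorem divX_intervalPoly :
    divX (intervalPoly g m h r n) = ∑ x ∈ intervals m h n, ∑ k ∈ contacts m h x.1,
      C (ascentProd g r x.2) * (1 + X) ^ (#(contacts m 0 (x.1.drop k)) - 1) := by
  rw [intervalPoly, ← divX_hom_toFun, map_sum]
  refine sum_congr rfl fun x hx => ?_
  rw [divX_hom_toFun, divX_C_mul,
    divX_one_add_X_pow_card_contacts (isRun_fst_of_mem_intervals hx), mul_sum]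

theorem intervalPoly_succ :
    intervalPoly g m (h + 1) r n =
      ∑ ij ∈ antidiagonal n, intervalPoly g m 0 0 ij.2 * divX (intervalPoly g m h r ij.1) := by
  simp_rw [divX_intervalPoly, intervalPoly, sum_mul, mul_sum, sum_sigma']
  symm
  refine sum_bij (fun t _ => joinAt t.2.2.1 t.2.2.2 t.2.1) ?_ ?_ ?_ ?_
  · rintro ⟨⟨i, j⟩, y, x, k⟩ ht
    simp only [mem_sigma, HasAntidiagonal.mem_antidiagonal] at ht
    obtain ⟨rfl, hy, hx, hk⟩ := ht
    exact joinAt_mem_intervals hx hk hy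
  · rintro ⟨⟨i, j⟩, y, x, k⟩ ht ⟨⟨i', j'⟩, y', x', k'⟩ ht' e
    simp only [mem_sigma, HasAntidiagonal.mem_antidiagonal] at ht ht'
    obtain ⟨-, hy, hx, hk⟩ := ht
    obtain ⟨-, hy', hx', hk'⟩ := ht'
    obtain ⟨rfl, rfl, rfl⟩ := joinAt_inj hx hk hx' hk' e
    obtain rfl : i = i' := (mem_intervals.1 hx).2.1.symm.trans (mem_intervals.1 hx').2.1
    obtain rfl : j = j' := (mem_intervals.1 hy).2.1.symm.trans (mem_intervals.1 hy').2.1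
    rfl
  · intro z hz
    obtain ⟨i, j, hij, x, hx, k, hk, y, hy, rfl⟩ := exists_joinAt_of_mem_intervals hz
    exact ⟨⟨(i, j), y, x, k⟩, by simp [*], rfl⟩
  · rintro ⟨⟨i, j⟩, y, x, k⟩ ht
    simp only [mem_sigma, HasAntidiagonal.mem_antidiagonal] at ht
    obtain ⟨-, -, hx, hk⟩ := ht
    dsimp only [joinAt]
    rw [ascentProd_append_E_cons, C_mul,
      card_contacts_join (mem_contacts.1 hk).2 (isRun_drop_of_mem_contacts hx hk), pow_add]
    ring

end IntervalPoly

/-! ### The quadratic system -/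

section QuadraticSystem

open Finset.HasAntidiagonal

variable {K A : Type*} [CommRing K] [CommRing A]

/-- The system of quadratic equations satisfied by the iterates of a divided difference: `Y k` is
the `k`-th coefficient of the catalytic series, and `Z r k` that of the series for paths preceded
by `r` north steps. -/
structure IsSolution (t : K) (h : ℕ → K) (m : ℕ) (Y : ℕ → K) (Z : ℕ → ℕ → K) : Prop where
  zero : Y 0 = 1
  succ (k : ℕ) : Y (k + 1) = Z 0 k
  quadratic (r k : ℕ) :
    Z r k = h r * Y k + t * ∑ p ∈ antidiagonal k, Y p.1 * Z (r + 1) (p.2 + m)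

/-- `D` is a derivation twisted by the retraction `ε` onto the subring of constants `ι`, such as
the divided difference `p ↦ (p - p(0)) / X` of polynomials. -/
structure IsTwistedDerivation (ε : A →+* K) (ι : K →+* A) (D : A →+ A) : Prop where
  retraction (c : K) : ε (ι c) = c
  map_const (c : K) : D (ι c) = 0
  map_mul (a b : A) : D (a * b) = D a * b + ι (ε a) * D b

namespace IsTwistedDerivation

variable {ε : A →+* K} {ι : K →+* A} {D : A →+ A} (hD : IsTwistedDerivation ε ι D)

include hD

theorem map_const_mul (c : K) (a : A) : D (ι c * a) = ι c * D a := by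
  rw [hD.map_mul, hD.map_const, hD.retraction, zero_mul, zero_add]

theorem iterate_map_const_mul (k : ℕ) (c : K) (a : A) : D^[k] (ι c * a) = ι c * D^[k] a := by
  induction k generalizing a with
  | zero => rfl
  | succ k ih => rw [Function.iterate_succ_apply, hD.map_const_mul, ih, Function.iterate_succ_apply]

theorem retraction_iterate_mul (k : ℕ) (a b : A) :
    ε (D^[k] (a * b)) = ∑ p ∈ antidiagonal k, ε (D^[p.1] a) * ε (D^[p.2] b) := by
  induction k generalizing a b with
  | zero => simp
  | succ k ih =>
    rw [Function.iterate_succ_apply, hD.map_mul, iterate_map_add, map_add, ih,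
      hD.iterate_map_const_mul, _root_.map_mul, hD.retraction, Finset.Nat.sum_antidiagonal_succ,
      add_comm]
    rfl

theorem isSolution {t : K} {h : ℕ → K} {m : ℕ} {x : A} {S : ℕ → A} (hx : ε x = 1)
    (hxS : D x = S 0) (hS : ∀ r, S r = ι (h r) * x + ι t * (x * D^[m] (S (r + 1)))) :
    IsSolution t h m (fun k => ε (D^[k] x)) fun r k => ε (D^[k] (S r)) where
  zero := hx
  succ k := by rw [Function.iterate_succ_apply, hxS]
  quadratic r k := by
    conv_lhs => rw [hS r]
    rw [iterate_map_add, hD.iterate_map_const_mul, hD.iterate_map_const_mul, map_add,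
      _root_.map_mul, _root_.map_mul, hD.retraction, hD.retraction, hD.retraction_iterate_mul]
    simp only [Function.iterate_add_apply]

end IsTwistedDerivation

namespace IsSolution

variable {t : A} {h : ℕ → A} {m : ℕ} {Y Y' : ℕ → A} {Z Z' : ℕ → ℕ → A}

theorem pow_dvd_sub (s : IsSolution t h m Y Z) (s' : IsSolution t h m Y' Z') (n : ℕ) :
    (∀ k, t ^ n ∣ Y k - Y' k) ∧ ∀ r k, t ^ n ∣ Z r k - Z' r k := by
  induction n with
  | zero => simp
  | succ n ih =>
    have hZ (k : ℕ) (hk : t ^ (n + 1) ∣ Y k - Y' k) (r : ℕ) : t ^ (n + 1) ∣ Z r k - Z' r k := by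
      rw [s.quadratic, s'.quadratic, add_sub_add_comm, ← mul_sub, ← mul_sub,
        ← Finset.sum_sub_distrib, pow_succ']
      refine dvd_add ((pow_succ' t n ▸ hk).mul_left _) (mul_dvd_mul_left _ ?_)
      exact Finset.dvd_sum fun p _ => dvd_mul_sub_mul (ih.1 _) (ih.2 _ _)
    have hY (k : ℕ) : t ^ (n + 1) ∣ Y k - Y' k := by
      induction k with
      | zero => simp [s.zero, s'.zero]
      | succ k ihk => rw [s.succ, s'.succ]; exact hZ k ihk 0
    exact ⟨hY, fun r k => hZ k (hY k) r⟩

theorem unique {R : Type*} [CommRing R] {h : ℕ → PowerSeries R} {Y Y' : ℕ → PowerSeries R}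
    {Z Z' : ℕ → ℕ → PowerSeries R} (s : IsSolution PowerSeries.X h m Y Z)
    (s' : IsSolution PowerSeries.X h m Y' Z') (k : ℕ) : Y k = Y' k := by
  ext n
  have := PowerSeries.X_pow_dvd_iff.1 ((s.pow_dvd_sub s' (n + 1)).1 k) n n.lt_succ_self
  rwa [map_sub, sub_eq_zero] at this

end IsSolution

end QuadraticSystem

section CombinatorialSolution

open Finset Polynomial

variable {R : Type*} [CommRing R]

theorem divX_mul (p q : R[X]) : divX (p * q) = divX p * q + C (p.coeff 0) * divX q := by
  conv_lhs => rw [← divX_mul_X_add p, add_mul, divX_add, divX_C_mul]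
  congr 1
  ext n
  rw [coeff_divX, mul_right_comm, coeff_mul_X]

/-- Coefficientwise `Polynomial.divX` on power series. -/
noncomputable def seriesDivX : PowerSeries R[X] →+ PowerSeries R[X] where
  toFun f := PowerSeries.mk fun n => divX (PowerSeries.coeff n f)
  map_zero' := by ext n; simp
  map_add' f g := by ext1 n; simp [divX_add]

theorem coeff_seriesDivX (f : PowerSeries R[X]) (n : ℕ) :
    PowerSeries.coeff n (seriesDivX f) = divX (PowerSeries.coeff n f) := by
  simp [seriesDivX]

theorem seriesDivX_mul (f g : PowerSeries R[X]) : seriesDivX (f * g) = seriesDivX f * g +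
    PowerSeries.map C (PowerSeries.map constantCoeff f) * seriesDivX g := by
  ext1 n
  simp only [map_add, coeff_seriesDivX, PowerSeries.coeff_mul, PowerSeries.coeff_map,
    ← divX_hom_toFun, map_sum, ← sum_add_distrib]
  simp only [divX_hom_toFun, divX_mul, constantCoeff_apply]

/-- The operator `p ↦ f * seriesDivX p` by which adding one to the initial height acts on the
series of intervals. -/
noncomputable def mulSeriesDivX (f : PowerSeries R[X]) : PowerSeries R[X] →+ PowerSeries R[X] :=
  (AddMonoidHom.mulLeft f).comp seriesDivX

theorem mulSeriesDivX_apply (f p : PowerSeries R[X]) : mulSeriesDivX f p = f * seriesDivX p := rfl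

theorem isTwistedDerivation_mulSeriesDivX (f : PowerSeries R[X]) : IsTwistedDerivation
    (PowerSeries.map constantCoeff) (PowerSeries.map C) (mulSeriesDivX f) where
  retraction c := by ext n; simp
  map_const c := by
    have : seriesDivX (PowerSeries.map C c) = 0 := by ext1 n; simp [coeff_seriesDivX]
    rw [mulSeriesDivX_apply, this, mul_zero]
  map_mul a b := by
    simp only [mulSeriesDivX_apply, seriesDivX_mul]
    ring

variable (g : ℕ → R) (m h r : ℕ)

/-- The generating series of `intervalPoly g m h r n` over all sizes `n`. -/
noncomputable def intervalSeries : PowerSeries R[X] :=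
  PowerSeries.mk (intervalPoly g m h r)

theorem intervalSeries_succ :
    intervalSeries g m (h + 1) r =
      mulSeriesDivX (intervalSeries g m 0 0) (intervalSeries g m h r) := by
  ext1 n
  rw [mulSeriesDivX_apply, PowerSeries.coeff_mul, ← Finset.Nat.sum_antidiagonal_swap]
  simp only [intervalSeries, PowerSeries.coeff_mk, coeff_seriesDivX, intervalPoly_succ,
    Prod.fst_swap, Prod.snd_swap]

theorem iterate_intervalSeries (k : ℕ) :
    (mulSeriesDivX (intervalSeries g m 0 0))^[k] (intervalSeries g m h r) =
      intervalSeries g m (h + k) r := by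
  induction k with
  | zero => rfl
  | succ k ih =>
    rw [Function.iterate_succ_apply', ih, ← add_assoc, intervalSeries_succ]

theorem intervalSeries_zero : intervalSeries g m 0 r =
    PowerSeries.C (C (g r)) * PowerSeries.C (1 + X) +
      PowerSeries.X * (PowerSeries.C (1 + X) * intervalSeries g m m (r + 1)) := by
  ext1 n
  rw [map_add, ← map_mul PowerSeries.C]
  cases n with
  | zero => simp [intervalSeries, intervalPoly_zero_zero]
  | succ n =>
    rw [PowerSeries.coeff_succ_X_mul, PowerSeries.coeff_C_mul, PowerSeries.coeff_C]
    simp [intervalSeries, intervalPoly_zero_succ]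

theorem seriesDivX_one_add_X : seriesDivX (PowerSeries.C (1 + X : R[X])) = 1 := by
  ext1 n
  rw [coeff_seriesDivX, PowerSeries.coeff_C, PowerSeries.coeff_one]
  split_ifs
  · simpa using divX_one_add_X_mul (1 : R[X])
  · simp

theorem coeff_zero_intervalPoly (n : ℕ) :
    (intervalPoly g m h r n).coeff 0 = ∑ x ∈ intervals m h n, ascentProd g r x.2 := by
  simp [intervalPoly, coeff_zero_eq_eval_zero, eval_finsetSum]

theorem exists_isSolution_ascentProd :
    ∃ Y Z, IsSolution PowerSeries.X (fun r => PowerSeries.C (g r)) m Y Z ∧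
      Y 1 = PowerSeries.mk fun n => ∑ x ∈ intervals m 0 n, ascentProd g 0 x.2 := by
  have hx : mulSeriesDivX (intervalSeries g m 0 0) (PowerSeries.C (1 + X)) =
      intervalSeries g m 0 0 := by
    rw [mulSeriesDivX_apply, seriesDivX_one_add_X, mul_one]
  refine ⟨_, _, (isTwistedDerivation_mulSeriesDivX (intervalSeries g m 0 0)).isSolution
    (S := intervalSeries g m 0) ?_ hx fun r => ?_, ?_⟩
  · simp
  · simp only [PowerSeries.map_C, PowerSeries.map_X]
    rw [iterate_intervalSeries, zero_add, intervalSeries_zero]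
  · ext n
    rw [Function.iterate_one, hx, PowerSeries.coeff_map, PowerSeries.coeff_mk, intervalSeries,
      PowerSeries.coeff_mk, constantCoeff_apply, coeff_zero_intervalPoly]

end CombinatorialSolution

/-! ### Resultants and Laurent polynomials -/

section Resultant

open Polynomial

variable {A B : Type*} [CommRing A] [CommRing B] {f : A[X]}

/-- The resultant of two polynomials at their natural degrees. For monic `f` this is the norm of
the class of `g` in `A[X] / f`, hence it commutes with all ring homomorphisms. -/
noncomputable def monicResultant (f g : A[X]) : A := resultant f g f.natDegree g.natDegree

theorem resultant_eq_monicResultant (hf : f.Monic) {g : A[X]} {n : ℕ} (hn : g.natDegree ≤ n) :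
    resultant f g f.natDegree n = monicResultant f g := by
  obtain ⟨k, rfl⟩ := Nat.exists_eq_add_of_le hn
  rw [resultant_add_right_deg _ _ _ _ _ le_rfl, hf.coeff_natDegree, one_pow, one_mul,
    monicResultant]

theorem map_monicResultant (hf : f.Monic) (φ : A →+* B) (g : A[X]) :
    φ (monicResultant f g) = monicResultant (f.map φ) (g.map φ) := by
  nontriviality B
  rw [← resultant_eq_monicResultant (hf.map φ) (natDegree_map_le (p := g)), hf.natDegree_map,
    resultant_map_map, monicResultant]

theorem monicResultant_mul_right (hf : f.Monic) (g₁ g₂ : A[X]) :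
    monicResultant f (g₁ * g₂) = monicResultant f g₁ * monicResultant f g₂ := by
  rw [← resultant_eq_monicResultant hf natDegree_mul_le, resultant_mul_right _ _ _ _ le_rfl,
    monicResultant, monicResultant]

theorem monicResultant_C_mul_right (hf : f.Monic) (r : A) (g : A[X]) :
    monicResultant f (C r * g) = r ^ f.natDegree * monicResultant f g := by
  rw [← resultant_eq_monicResultant hf (natDegree_C_mul_le r g), resultant_C_mul_right,
    monicResultant]

theorem monicResultant_X_sub_C (hf : f.Monic) (r : A) :
    monicResultant f (X - C r) = (-1) ^ f.natDegree * eval r f := by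
  rw [← resultant_eq_monicResultant hf (natDegree_X_sub_C_le r),
    resultant_X_sub_C_right _ _ _ le_rfl]

theorem monicResultant_X_sub_C_mul_left (hf : f.Monic) (u : A) (g : A[X]) :
    monicResultant ((X - C u) * f) g = eval u g * monicResultant f g := by
  nontriviality A
  have := resultant_mul_left (X - C u) f g _ le_rfl
  rwa [natDegree_X_sub_C, resultant_X_sub_C_left _ _ _ le_rfl, ← natDegree_X_sub_C u,
    ← (monic_X_sub_C u).natDegree_mul hf] at this

theorem map_monicResultant_eq_zero (hf : f.natDegree ≠ 0) (g : A[X]) (φ : A →+* B) (u : B)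
    (hfu : eval₂ φ u f = 0) (hgu : eval₂ φ u g = 0) : φ (monicResultant f g) = 0 := by
  obtain ⟨p, q, -, -, h⟩ :=
    exists_mul_add_mul_eq_C_resultant f g le_rfl (le_refl g.natDegree) (Or.inl hf)
  simpa [monicResultant, hfu, hgu] using (congrArg (eval₂ φ u) h).symm

theorem evalRingHom_zero_comp_C : (evalRingHom (0 : A)).comp C = RingHom.id A := by
  ext
  simp

/-- The pencil `det (q(u) - Y u)` of multiplications by polynomials in the class `u` of the
indeterminate in `A[X] / f`, as a polynomial in `Y`. -/
noncomputable def pencil (f q : A[X]) : A[X] :=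
  monicResultant (f.map C) (q.map C - C X * X)

theorem map_pencil (hf : f.Monic) (q : A[X]) (φ : A →+* B) :
    (pencil f q).map φ = pencil (f.map φ) (q.map φ) := by
  rw [pencil, ← coe_mapRingHom, map_monicResultant (hf.map C)]
  simp only [Polynomial.map_map, mapRingHom_comp_C, Polynomial.map_sub, Polynomial.map_mul,
    map_C, map_X, coe_mapRingHom, pencil]

theorem eval₂_pencil (hf : f.Monic) (hf₀ : f.natDegree ≠ 0) (q : A[X]) (φ : A →+* B) {u y : B}
    (hfu : eval₂ φ u f = 0) (hyu : y * u = eval₂ φ u q) : eval₂ φ y (pencil f q) = 0 := by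
  have : Nontrivial A := (nontrivial_iff.1 ⟨f, 0, fun h => hf₀ (by simp [h])⟩)
  refine map_monicResultant_eq_zero (hf.natDegree_map C ▸ hf₀) _ (eval₂RingHom φ y) u ?_ ?_
  · rwa [eval₂_map, eval₂RingHom_comp_C]
  · simp [eval₂_map, eval₂RingHom_comp_C, hyu]

theorem coeff_zero_pencil (hf : f.Monic) (q : A[X]) :
    (pencil f q).coeff 0 = monicResultant f q := by
  rw [coeff_zero_eq_eval_zero, ← coe_evalRingHom, pencil, map_monicResultant (hf.map C)]
  simp [Polynomial.map_map, evalRingHom_zero_comp_C]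

theorem natDegree_le_and_coeff_eq_of_toLaurent {p q : A[X]} {d : ℕ}
    (h : toLaurent p = LaurentPolynomial.T d * LaurentPolynomial.invert (toLaurent q)) :
    p.natDegree ≤ d ∧ p.coeff d = q.coeff 0 := by
  have hpq : p * X ^ q.natDegree = q.reverse * X ^ d := by
    apply toLaurent_injective
    rw [map_mul, map_mul, toLaurent_X_pow, toLaurent_X_pow, LaurentPolynomial.toLaurent_reverse, h]
    ring
  have hcoeff (j : ℕ) : p.coeff (d + j) = q.reverse.coeff (q.natDegree + j) := by
    have := congrArg (coeff · (d + j + q.natDegree)) hpq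
    simp only [coeff_mul_X_pow] at this
    rw [this, show d + j + q.natDegree = q.natDegree + j + d by ring, coeff_mul_X_pow]
  constructor
  · refine natDegree_le_iff_coeff_eq_zero.2 fun k hk => ?_
    obtain ⟨j, rfl⟩ := Nat.exists_eq_add_of_lt hk
    rw [add_assoc, hcoeff]
    exact coeff_eq_zero_of_natDegree_lt (q.reverse_natDegree_le.trans_lt (by omega))
  · simpa [coeff_reverse] using hcoeff 0

theorem T_one_mul_T_neg_one :
    (LaurentPolynomial.T 1 * LaurentPolynomial.T (-1) : LaurentPolynomial A) = 1 := by
  rw [← LaurentPolynomial.T_add, add_neg_cancel, LaurentPolynomial.T_zero]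

theorem toLaurent_pencil [Nontrivial A] (hf : f.Monic) (q : A[X]) : toLaurent (pencil f q) =
    LaurentPolynomial.T f.natDegree * LaurentPolynomial.invert
      (toLaurent (monicResultant (f.map C) (C X * q.map C - X))) := by
  let inv : LaurentPolynomial A →+* LaurentPolynomial A := RingHomClass.toRingHom
    LaurentPolynomial.invert
  change _ = _ * inv _
  have hC : (toLaurent (R := A)).comp C = LaurentPolynomial.C := by ext; simp
  have hinvC : inv.comp LaurentPolynomial.C = LaurentPolynomial.C := by ext1; simp [inv]
  have hT : (LaurentPolynomial.T f.natDegree : LaurentPolynomial A) =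
      LaurentPolynomial.T 1 ^ (f.map LaurentPolynomial.C).natDegree := by
    rw [hf.natDegree_map, LaurentPolynomial.T_pow, mul_one]
  rw [pencil, map_monicResultant (hf.map C), map_monicResultant (hf.map C),
    map_monicResultant ((hf.map C).map _)]
  simp only [Polynomial.map_map, hC, hinvC, Polynomial.map_sub, Polynomial.map_mul, map_C, map_X]
  rw [hT, ← monicResultant_C_mul_right (hf.map _), mul_sub, ← mul_assoc, ← C_mul]
  simp only [inv, RingHom.coe_coe, toLaurent_X, LaurentPolynomial.invert_T, T_one_mul_T_neg_one,
    map_one, one_mul]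

theorem natDegree_pencil_le [Nontrivial A] (hf : f.Monic) (q : A[X]) :
    (pencil f q).natDegree ≤ f.natDegree :=
  (natDegree_le_and_coeff_eq_of_toLaurent (toLaurent_pencil hf q)).1

theorem coeff_natDegree_pencil [Nontrivial A] (hf : f.Monic) (q : A[X]) :
    (pencil f q).coeff f.natDegree = f.coeff 0 := by
  have hX : monicResultant f X = (-1) ^ f.natDegree * f.coeff 0 := by
    rw [coeff_zero_eq_eval_zero, ← monicResultant_X_sub_C hf, C_0, sub_zero]
  have hneg : (-X : A[X]) = C (-1) * X := by simp
  rw [(natDegree_le_and_coeff_eq_of_toLaurent (toLaurent_pencil hf q)).2,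
    coeff_zero_eq_eval_zero, ← coe_evalRingHom, map_monicResultant (hf.map C)]
  simp only [Polynomial.map_map, evalRingHom_zero_comp_C, Polynomial.map_sub, Polynomial.map_mul,
    map_C, map_X, coe_evalRingHom, eval_X, map_zero, zero_mul, zero_sub, Polynomial.map_id]
  rw [hneg, monicResultant_C_mul_right hf, hX, ← mul_assoc, ← mul_pow]
  simp

theorem monicResultant_X_sub_C_pow_left [Nontrivial A] (a : A) (d : ℕ) (g : A[X]) :
    monicResultant ((X - C a) ^ d) g = eval a g ^ d := by
  rw [monicResultant, (monic_X_sub_C a).natDegree_pow, natDegree_X_sub_C, mul_one,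
    resultant_X_sub_C_pow_left _ _ _ _ le_rfl]

theorem pencil_X_sub_C_pow [Nontrivial A] (a : A) (d : ℕ) (q : A[X]) :
    pencil ((X - C a) ^ d) q = (C (q.eval a) - C a * X) ^ d := by
  rw [pencil, Polynomial.map_pow, Polynomial.map_sub, map_X, map_C,
    monicResultant_X_sub_C_pow_left]
  simp [eval_map, mul_comm X]

end Resultant

section Laurent

open Polynomial

variable {R : Type*} [CommRing R]

theorem eval₂_C_T_one (p : R[X]) :
    eval₂ LaurentPolynomial.C (LaurentPolynomial.T 1) p = toLaurent p := by
  have : eval₂RingHom LaurentPolynomial.C (LaurentPolynomial.T 1) = toLaurent (R := R) := by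
    ext <;> simp
  rw [← this, coe_eval₂RingHom]

/-- The embedding of polynomials in `1 / u` into Laurent polynomials in `u`. -/
noncomputable def toLaurentInv : R[X] →+* LaurentPolynomial R :=
  (RingHomClass.toRingHom LaurentPolynomial.invert).comp toLaurent

@[simp]
theorem toLaurentInv_X : toLaurentInv (X : R[X]) = LaurentPolynomial.T (-1) := by
  simp [toLaurentInv]

@[simp]
theorem toLaurentInv_C (r : R) : toLaurentInv (C r) = LaurentPolynomial.C r := by
  simp [toLaurentInv]

theorem toLaurentInv_comp_C : (toLaurentInv (R := R)).comp C = LaurentPolynomial.C := by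
  ext1 r
  exact toLaurentInv_C r

theorem toLaurentInv_injective : Function.Injective (toLaurentInv (R := R)) :=
  LaurentPolynomial.invert.injective.comp toLaurent_injective

theorem toLaurent_one_add_X :
    toLaurent (1 + X : R[X]) = LaurentPolynomial.T 1 * toLaurentInv (1 + X) := by
  rw [map_add, map_add, mul_add, toLaurent_X, toLaurentInv_X, T_one_mul_T_neg_one, map_one,
    map_one, mul_one, add_comm]

variable (R) in
/-- The Laurent polynomial `θ = (1 + u) ^ (m + 1) / u ^ m`. -/
noncomputable def theta (m : ℕ) : LaurentPolynomial R :=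
  toLaurent (1 + X) ^ (m + 1) * LaurentPolynomial.T (-1) ^ m

theorem T_one_pow_mul_theta (m : ℕ) :
    LaurentPolynomial.T 1 ^ m * theta R m = toLaurent (1 + X) ^ (m + 1) := by
  rw [theta, mul_left_comm, ← mul_pow, T_one_mul_T_neg_one, one_pow, mul_one]

theorem theta_eq (m : ℕ) :
    theta R m = LaurentPolynomial.T 1 * toLaurentInv (1 + X) ^ (m + 1) := by
  rw [theta, toLaurent_one_add_X, mul_pow, mul_right_comm, pow_succ', mul_assoc
    (LaurentPolynomial.T 1), ← mul_pow, T_one_mul_T_neg_one, one_pow, mul_one]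

/-- Evaluation of polynomials at `θ`. -/
noncomputable def evalTheta (m : ℕ) : R[X] →+* LaurentPolynomial R :=
  eval₂RingHom LaurentPolynomial.C (theta R m)

@[simp]
theorem evalTheta_X (m : ℕ) : evalTheta m (X : R[X]) = theta R m := by simp [evalTheta]

@[simp]
theorem evalTheta_C (m : ℕ) (r : R) : evalTheta m (C r) = LaurentPolynomial.C r := by
  simp [evalTheta]

theorem evalTheta_comp_C (m : ℕ) : (evalTheta m).comp (C : R →+* R[X]) = LaurentPolynomial.C := by
  ext1 r
  exact evalTheta_C m r

theorem X_pow_mul_eq_of_evalTheta_eq {m : ℕ} {p q : R[X]} (h : evalTheta m p = toLaurentInv q) :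
    X ^ p.natDegree * q = ∑ j ∈ Finset.range (p.natDegree + 1),
      C (p.coeff j) * X ^ (p.natDegree - j) * (1 + X) ^ ((m + 1) * j) := by
  apply toLaurentInv_injective
  rw [map_mul, ← h, evalTheta, coe_eval₂RingHom, eval₂_eq_sum_range, map_sum, Finset.mul_sum]
  refine Finset.sum_congr rfl fun j hj => ?_
  obtain ⟨k, hk⟩ := Nat.exists_eq_add_of_le (Finset.mem_range_succ_iff.1 hj)
  have hT : (LaurentPolynomial.T 1 * LaurentPolynomial.T (-1) : LaurentPolynomial R) ^ j = 1 := by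
    rw [T_one_mul_T_neg_one, one_pow]
  rw [mul_pow] at hT
  simp only [map_mul, map_pow, toLaurentInv_X, toLaurentInv_C, theta_eq, hk, pow_add, pow_mul,
    Nat.add_sub_cancel_left]
  linear_combination LaurentPolynomial.C (p.coeff j) * LaurentPolynomial.T (-1) ^ k *
    ((toLaurentInv (1 + X)) ^ (m + 1)) ^ j * hT

theorem eq_C_of_evalTheta_eq_toLaurentInv {m : ℕ} {p q : R[X]}
    (h : evalTheta m p = toLaurentInv q) : p = C (q.coeff 0) := by
  have key := congrArg (coeff · 0) (X_pow_mul_eq_of_evalTheta_eq h)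
  simp only [finsetSum_coeff, mul_coeff_zero] at key
  rw [Finset.sum_eq_single_of_mem p.natDegree (by simp)] at key
  · rw [coeff_natDegree, Nat.sub_self, pow_zero, coeff_X_pow] at key
    by_cases hd : p.natDegree = 0
    · rw [eq_C_of_natDegree_eq_zero hd]
      simpa [coeff_zero_eq_eval_zero, leadingCoeff, hd] using key.symm
    · rw [if_neg (Ne.symm hd), zero_mul] at key
      have hp : p = 0 := by
        simpa [coeff_zero_eq_eval_zero, eq_comm (a := (0 : R))] using key
      simp [hp] at hd
  · intro j hj hne
    have : j < p.natDegree := (Finset.mem_range_succ_iff.1 hj).lt_of_ne hne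
    rw [coeff_X_pow, if_neg (by omega), mul_zero, zero_mul]

theorem theta_mul_left_cancel {m : ℕ} {a b : LaurentPolynomial R}
    (h : theta R m * a = theta R m * b) : a = b := by
  have h₁ : toLaurent (1 + X) ^ (m + 1) * a = toLaurent (1 + X) ^ (m + 1) * b := by
    rw [← T_one_pow_mul_theta, mul_assoc, mul_assoc, h]
  obtain ⟨n, p, hp⟩ := LaurentPolynomial.exists_T_pow (a - b)
  have hp₀ : (1 + X) ^ (m + 1) * p = 0 := by
    apply toLaurent_injective
    rw [map_mul, map_pow, hp, ← mul_assoc, mul_sub, h₁, sub_self, zero_mul, map_zero]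
  have hmonic : (1 + X : R[X]).Monic := by rw [add_comm]; exact monic_X_add_C 1
  rw [(hmonic.pow (m + 1)).mul_right_eq_zero_iff.1 hp₀, map_zero] at hp
  exact sub_eq_zero.1 ((LaurentPolynomial.isUnit_T n).mul_left_eq_zero.1 hp.symm)

end Laurent

section Factorization

open Polynomial

variable {S : Type*} [CommRing S]

/-- The polynomial whose roots `u` satisfy `(1 + u) ^ (m + 1) = t * u ^ m`. -/
noncomputable def thetaPoly (m : ℕ) (t : S) : S[X] := (1 + X) ^ (m + 1) - C t * X ^ m

theorem map_thetaPoly {S' : Type*} [CommRing S'] (φ : S →+* S') (m : ℕ) (t : S) :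
    (thetaPoly m t).map φ = thetaPoly m (φ t) := by
  simp [thetaPoly]

theorem natDegree_thetaPoly [Nontrivial S] (m : ℕ) (t : S) :
    (thetaPoly m t).natDegree = m + 1 := by
  unfold thetaPoly
  compute_degree!

theorem monic_thetaPoly (m : ℕ) (t : S) : (thetaPoly m t).Monic := by
  nontriviality S
  rw [Monic, leadingCoeff, natDegree_thetaPoly, thetaPoly, coeff_sub, coeff_one_add_X_pow,
    coeff_C_mul, coeff_X_pow]
  simp

theorem coeff_zero_thetaPoly {m : ℕ} (hm : m ≠ 0) (t : S) : (thetaPoly m t).coeff 0 = 1 := by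
  simp [thetaPoly, coeff_zero_eq_eval_zero, hm]

/-- The coefficients of the quotient of `thetaPoly m t` by one of its linear factors `X - u`,
as polynomials in `v = 1 / u`, computed by Ruffini's rule from the constant term upwards. -/
def cofactorCoeff (m : ℕ) (v : S) : ℕ → S
  | 0 => 0
  | j + 1 => v * (cofactorCoeff m v j + (m + 1).choose j)

/-- The quotient of `thetaPoly m t` by one of its linear factors `X - u`, where `v = 1 / u`. -/
noncomputable def cofactor (m : ℕ) (v : S) : S[X] :=
  X ^ m - ∑ j ∈ Finset.range m, C (cofactorCoeff m v (j + 1)) * X ^ j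

theorem map_cofactorCoeff {S' : Type*} [CommRing S'] (φ : S →+* S') (m : ℕ) (v : S) (j : ℕ) :
    φ (cofactorCoeff m v j) = cofactorCoeff m (φ v) j := by
  induction j with
  | zero => exact map_zero φ
  | succ j ih => simp only [cofactorCoeff, map_mul, map_add, map_natCast, ih]

theorem map_cofactor {S' : Type*} [CommRing S'] (φ : S →+* S') (m : ℕ) (v : S) :
    (cofactor m v).map φ = cofactor m (φ v) := by
  simp only [cofactor, Polynomial.map_sub, Polynomial.map_pow, map_X, Polynomial.map_sum,
    Polynomial.map_mul, map_C, map_cofactorCoeff φ]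

theorem cofactor_zero (m : ℕ) : cofactor m (0 : S) = X ^ m := by
  simp [cofactor, cofactorCoeff]

theorem monic_cofactor (m : ℕ) (v : S) : (cofactor m v).Monic := by
  refine monic_X_pow_sub ((degree_lt_iff_coeff_zero _ _).2 fun k hk => ?_)
  rw [finsetSum_coeff]
  refine Finset.sum_eq_zero fun j hj => ?_
  rw [coeff_C_mul_X_pow, if_neg (by have := Finset.mem_range.1 hj; omega)]

theorem one_add_X_pow_succ (m : ℕ) : (1 + X : S[X]) ^ (m + 1) =
    ∑ j ∈ Finset.range m, ((m + 1).choose j : S[X]) * X ^ j +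
      ((m : S[X]) + 1) * X ^ m + X ^ (m + 1) := by
  rw [add_comm 1 X, add_pow, Finset.sum_range_succ, Finset.sum_range_succ]
  simp [mul_comm]

theorem X_sub_C_mul_cofactor {u v : S} (huv : u * v = 1) (m : ℕ) :
    (X - C u) * cofactor m v = thetaPoly m (u + (m + 1) + cofactorCoeff m v m) := by
  have htel := Finset.sum_range_sub (fun j => C (cofactorCoeff m v j) * X ^ j) m
  have hX : X * ∑ j ∈ Finset.range m, C (cofactorCoeff m v (j + 1)) * X ^ j =
      ∑ j ∈ Finset.range m, C (cofactorCoeff m v (j + 1)) * X ^ (j + 1) := by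
    rw [Finset.mul_sum]
    exact Finset.sum_congr rfl fun j _ => by ring
  have hu : C u * ∑ j ∈ Finset.range m, C (cofactorCoeff m v (j + 1)) * X ^ j =
      ∑ j ∈ Finset.range m, C (cofactorCoeff m v j) * X ^ j +
        ∑ j ∈ Finset.range m, ((m + 1).choose j : S[X]) * X ^ j := by
    rw [Finset.mul_sum, ← Finset.sum_add_distrib]
    refine Finset.sum_congr rfl fun j _ => ?_
    rw [← mul_assoc, ← C_mul, cofactorCoeff, ← mul_assoc, huv, one_mul, C_add, C_eq_natCast,
      add_mul]
  simp only [Finset.sum_sub_distrib, pow_zero, mul_one, show cofactorCoeff m v 0 = 0 from rfl,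
    C_0, sub_zero] at htel
  simp only [thetaPoly, cofactor, C_add, C_1, map_natCast, one_add_X_pow_succ]
  linear_combination hu - hX - htel

theorem thetaPoly_eq_X_sub_C_mul_cofactor {u v : S} (huv : u * v = 1) (m : ℕ) :
    thetaPoly m ((1 + u) ^ (m + 1) * v ^ m) = (X - C u) * cofactor m v := by
  have huv' : u ^ m * v ^ m = 1 := by rw [← mul_pow, huv, one_pow]
  have hroot := congrArg (eval u) (X_sub_C_mul_cofactor huv m)
  simp only [thetaPoly, eval_mul, eval_sub, eval_X, eval_C, sub_self, zero_mul, eval_pow, eval_add,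
    eval_one] at hroot
  rw [X_sub_C_mul_cofactor huv]
  congr 1
  linear_combination -v ^ m * hroot + (u + (m + 1) + cofactorCoeff m v m) * huv'

end Factorization

section KeyRelation

open Polynomial

variable {R : Type*} [CommRing R] {m : ℕ}

/-- A Birkhoff factorization `H(θ) = G(u) * K(1 / u)` of a function of `θ` into a polynomial in `u`
and a polynomial in `1 / u` with constant term one. -/
structure IsBirkhoffFactorization (m : ℕ) (H G K : R[X]ˣ) : Prop where
  evalTheta_eq : evalTheta m (H : R[X]) = toLaurent (G : R[X]) * toLaurentInv (K : R[X])
  coeff_zero : (K : R[X]).coeff 0 = 1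

/-- The Laurent polynomial `η = (1 + 1 / u) * G(u)`. -/
noncomputable def etaLaurent (G : R[X]) : LaurentPolynomial R := toLaurentInv (1 + X) * toLaurent G

theorem T_one_mul_etaLaurent (G : R[X]) :
    LaurentPolynomial.T 1 * etaLaurent G = toLaurent ((1 + X) * G) := by
  rw [etaLaurent, map_mul, toLaurent_one_add_X, mul_assoc]

theorem map_evalTheta_thetaPoly (m : ℕ) : (thetaPoly m (X : R[X])).map (evalTheta m) =
    (X - C (LaurentPolynomial.T 1)) * cofactor m (LaurentPolynomial.T (-1)) := by
  rw [map_thetaPoly, evalTheta_X, theta, map_add, map_one, toLaurent_X,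
    thetaPoly_eq_X_sub_C_mul_cofactor T_one_mul_T_neg_one]

theorem eval₂_evalTheta_thetaPoly (m : ℕ) :
    eval₂ (evalTheta m) (LaurentPolynomial.T 1) (thetaPoly m (X : R[X])) = 0 := by
  rw [← eval_map, map_evalTheta_thetaPoly]
  simp

theorem eval₂_evalTheta_map_C (m : ℕ) (G : R[X]) :
    eval₂ (evalTheta m) (LaurentPolynomial.T 1) (G.map C) = toLaurent G := by
  rw [eval₂_map, evalTheta_comp_C, eval₂_C_T_one]

theorem evalTheta_monicResultant (m : ℕ) (G : R[X]) :
    evalTheta m (monicResultant (thetaPoly m X) (G.map C)) =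
      toLaurent G * toLaurentInv (monicResultant (cofactor m X) (G.map C)) := by
  rw [map_monicResultant (monic_thetaPoly m X), map_monicResultant (monic_cofactor m X),
    map_evalTheta_thetaPoly, monicResultant_X_sub_C_mul_left (monic_cofactor m _), eval_map,
    eval₂_evalTheta_map_C, map_cofactor, toLaurentInv_X, Polynomial.map_map, Polynomial.map_map,
    evalTheta_comp_C, toLaurentInv_comp_C]

theorem coeff_zero_monicResultant_cofactor [Nontrivial R] (m : ℕ) (G : R[X]) :
    (monicResultant (cofactor m X) (G.map C)).coeff 0 = G.coeff 0 ^ m := by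
  rw [coeff_zero_eq_eval_zero, ← coe_evalRingHom, map_monicResultant (monic_cofactor m X),
    map_cofactor, coe_evalRingHom, eval_X, cofactor_zero, Polynomial.map_map,
    evalRingHom_zero_comp_C, Polynomial.map_id, ← sub_zero (X : R[X]), ← C_0,
    monicResultant_X_sub_C_pow_left, coeff_zero_eq_eval_zero]

variable [Nontrivial R] {H G K : R[X]ˣ}

theorem IsBirkhoffFactorization.monicResultant_eq (hf : IsBirkhoffFactorization m H G K) :
    monicResultant (thetaPoly m X) ((G : R[X]).map C) =
      C ((G : R[X]).coeff 0 ^ m) * (H : R[X]) := by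
  set N := monicResultant (cofactor m X) ((G : R[X]).map C) with hN
  have hK₀ : (↑K⁻¹ : R[X]).coeff 0 = 1 := by
    rw [← one_mul (coeff _ 0), ← hf.coeff_zero, ← mul_coeff_zero, K.mul_inv, coeff_one_zero,
      hf.coeff_zero]
  have hH : evalTheta m (H : R[X]) * evalTheta m (↑H⁻¹ : R[X]) = 1 := by simp [← map_mul]
  have hK : toLaurentInv (K : R[X]) * toLaurentInv (↑K⁻¹ : R[X]) = 1 := by simp [← map_mul]
  have key : evalTheta m (monicResultant (thetaPoly m X) ((G : R[X]).map C) * (↑H⁻¹ : R[X])) =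
      toLaurentInv (N * (↑K⁻¹ : R[X])) := by
    rw [map_mul, map_mul, evalTheta_monicResultant, ← hN]
    rw [hf.evalTheta_eq] at hH
    linear_combination toLaurentInv N * toLaurentInv (↑K⁻¹ : R[X]) * hH -
      toLaurent (G : R[X]) * toLaurentInv N * evalTheta m (↑H⁻¹ : R[X]) * hK
  have := eq_C_of_evalTheta_eq_toLaurentInv key
  rwa [mul_coeff_zero, hK₀, mul_one, coeff_zero_monicResultant_cofactor,
    Units.mul_inv_eq_iff_eq_mul] at this

/-- The characteristic polynomial of `η` over the polynomials in `θ`. -/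
noncomputable def etaPoly (m : ℕ) (G : R[X]) : R[X][X] :=
  pencil (thetaPoly m X) ((1 + X) * G.map C)

theorem natDegree_etaPoly_le (m : ℕ) (G : R[X]) : (etaPoly m G).natDegree ≤ m + 1 := by
  rw [← natDegree_thetaPoly m (X : R[X])]
  exact natDegree_pencil_le (monic_thetaPoly m X) _

theorem coeff_succ_etaPoly (hm : m ≠ 0) (G : R[X]) : (etaPoly m G).coeff (m + 1) = 1 := by
  rw [← coeff_zero_thetaPoly hm (X : R[X]), ← coeff_natDegree_pencil (monic_thetaPoly m X),
    natDegree_thetaPoly, etaPoly]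

theorem eval₂_etaPoly (m : ℕ) (G : R[X]) :
    eval₂ (evalTheta m) (etaLaurent G) (etaPoly m G) = 0 := by
  refine eval₂_pencil (monic_thetaPoly m X) (by simp [natDegree_thetaPoly]) _ _
    (eval₂_evalTheta_thetaPoly m) ?_
  rw [eval₂_mul, eval₂_evalTheta_map_C, mul_comm, T_one_mul_etaLaurent, map_mul]
  simp

theorem X_dvd_coeff_etaPoly (G : R[X]) {j : ℕ} (hj : j ≤ m) : X ∣ (etaPoly m G).coeff j := by
  have hG : (etaPoly m G).map (evalRingHom 0) = X ^ (m + 1) := by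
    rw [etaPoly, map_pencil (monic_thetaPoly m X), map_thetaPoly, coe_evalRingHom, eval_X,
      show thetaPoly m (0 : R) = (X - C (-1)) ^ (m + 1) by simp [thetaPoly, add_comm],
      pencil_X_sub_C_pow]
    simp
  rw [X_dvd_iff, coeff_zero_eq_eval_zero, ← coe_evalRingHom, ← coeff_map, hG, coeff_X_pow,
    if_neg (by omega)]

theorem IsBirkhoffFactorization.coeff_zero_etaPoly (hf : IsBirkhoffFactorization m H G K) :
    (etaPoly m (G : R[X])).coeff 0 = X * (C ((G : R[X]).coeff 0 ^ m) * (H : R[X])) := by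
  have hX : monicResultant (thetaPoly m (X : R[X])) (1 + X) = X := by
    rw [show (1 + X : R[X][X]) = X - C (-1) by simp [add_comm],
      monicResultant_X_sub_C (monic_thetaPoly m X), natDegree_thetaPoly]
    simp only [thetaPoly, eval_sub, eval_mul, eval_pow, eval_add, eval_one,
      eval_X, eval_C, add_neg_cancel, zero_pow m.succ_ne_zero, zero_sub]
    rw [mul_neg, pow_succ, mul_left_comm]
    simp [← mul_pow]
  rw [etaPoly, coeff_zero_pencil (monic_thetaPoly m X),
    monicResultant_mul_right (monic_thetaPoly m X), hX, hf.monicResultant_eq]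

theorem IsBirkhoffFactorization.exists_etaLaurent_pow_add_eq_zero
    (hf : IsBirkhoffFactorization m H G K) (hm : m ≠ 0) :
    ∃ d : ℕ → R[X], etaLaurent (G : R[X]) ^ (m + 1) +
      theta R m * (∑ j ∈ Finset.range m, evalTheta m (d j) * etaLaurent (G : R[X]) ^ (j + 1) +
        LaurentPolynomial.C ((G : R[X]).coeff 0 ^ m) * evalTheta m (H : R[X])) = 0 := by
  have hX (j : ℕ) : ∃ q, j < m → (etaPoly m (G : R[X])).coeff (j + 1) = X * q := by
    by_cases hj : j < m
    · exact (X_dvd_coeff_etaPoly (G : R[X]) hj).imp fun q hq _ => hq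
    · exact ⟨0, fun h => absurd h hj⟩
  choose d hd using hX
  refine ⟨d, ?_⟩
  have hsum : ∑ j ∈ Finset.range m,
      evalTheta m ((etaPoly m (G : R[X])).coeff (j + 1)) * etaLaurent (G : R[X]) ^ (j + 1) =
      theta R m * ∑ j ∈ Finset.range m,
        evalTheta m (d j) * etaLaurent (G : R[X]) ^ (j + 1) := by
    rw [Finset.mul_sum]
    refine Finset.sum_congr rfl fun j hj => ?_
    rw [hd j (Finset.mem_range.1 hj), map_mul, evalTheta_X, mul_assoc]
  have h := eval₂_etaPoly m (G : R[X])
  rw [eval₂_eq_sum_range' _ (Nat.lt_succ_of_le (natDegree_etaPoly_le m _)), Finset.sum_range_succ,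
    Finset.sum_range_succ', hsum, coeff_succ_etaPoly hm, hf.coeff_zero_etaPoly] at h
  simp only [map_mul, map_one, evalTheta_X, evalTheta_C, pow_zero, mul_one, one_mul] at h ⊢
  linear_combination h

end KeyRelation

/-! ### The explicit solution -/

section ExplicitSolution

open Polynomial

variable {R : Type*} [CommRing R] {m : ℕ}

/-- The divided difference `p ↦ (p - p(0)) / X` followed by multiplication by `f`. -/
noncomputable def mulDivX (f : R[X]) : R[X] →ₗ[R] R[X] where
  toFun p := f * divX p
  map_add' p q := by rw [divX_add, mul_add]
  map_smul' c p := by simp only [smul_eq_C_mul, divX_C_mul, mul_left_comm, RingHom.id_apply]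

theorem mulDivX_apply (f p : R[X]) : mulDivX f p = f * divX p := rfl

theorem isTwistedDerivation_mulDivX (f : R[X]) :
    IsTwistedDerivation constantCoeff C (mulDivX f).toAddMonoidHom where
  retraction c := by simp
  map_const c := by simp [mulDivX_apply]
  map_mul p q := by
    simp only [LinearMap.toAddMonoidHom_coe, mulDivX_apply, divX_mul, constantCoeff_apply]
    ring

theorem toLaurent_mulDivX (G p : R[X]) : toLaurent (mulDivX ((1 + X) * G) p) =
    (toLaurent p - LaurentPolynomial.C (p.coeff 0)) * etaLaurent G := by
  have hp := congrArg toLaurent (divX_mul_X_add p)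
  rw [map_add, map_mul, toLaurent_X, toLaurent_C] at hp
  rw [mulDivX_apply, map_mul, ← T_one_mul_etaLaurent]
  linear_combination etaLaurent G * hp

/-- The monomials in `θ` and `η`, with exponent of `η` between `1` and `m`, ordered by the exponent
of `1 / u` in their lowest term. -/
noncomputable def thetaEta (m : ℕ) (G : R[X]) (i : ℕ) : LaurentPolynomial R :=
  theta R m ^ (i / m) * etaLaurent G ^ (i % m + 1)

/-- The module over the polynomials in `θ` generated by `η, …, η ^ m`. -/
noncomputable def etaSpan (m : ℕ) (G : R[X]) : Submodule R (LaurentPolynomial R) :=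
  Submodule.span R (Set.range (thetaEta m G))

theorem etaLaurent_pow_mem_etaSpan (G : R[X]) {j : ℕ} (hj : j < m) :
    etaLaurent G ^ (j + 1) ∈ etaSpan m G :=
  Submodule.subset_span
    ⟨j, by rw [thetaEta, Nat.div_eq_of_lt hj, Nat.mod_eq_of_lt hj, pow_zero, one_mul]⟩

theorem theta_mul_mem_etaSpan (hm : m ≠ 0) {G : R[X]} {y : LaurentPolynomial R}
    (hy : y ∈ etaSpan m G) : theta R m * y ∈ etaSpan m G := by
  induction hy using Submodule.span_induction with
  | mem y hy =>
    obtain ⟨i, rfl⟩ := hy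
    refine Submodule.subset_span ⟨i + m, ?_⟩
    rw [thetaEta, thetaEta, Nat.add_div_right _ (Nat.pos_of_ne_zero hm), Nat.add_mod_right,
      pow_succ', mul_assoc]
  | zero => rw [mul_zero]; exact zero_mem _
  | add y z _ _ hy hz => rw [mul_add]; exact add_mem hy hz
  | smul r y _ hy => rw [mul_smul_comm]; exact Submodule.smul_mem _ _ hy

theorem evalTheta_mul_mem_etaSpan (hm : m ≠ 0) {G : R[X]} (p : R[X]) {y : LaurentPolynomial R}
    (hy : y ∈ etaSpan m G) : evalTheta m p * y ∈ etaSpan m G := by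
  induction p using Polynomial.induction_on' generalizing y with
  | add p q hp hq => rw [map_add, add_mul]; exact add_mem (hp hy) (hq hy)
  | monomial k r =>
    rw [← C_mul_X_pow_eq_monomial, map_mul, map_pow, evalTheta_C, evalTheta_X, mul_assoc,
      ← LaurentPolynomial.smul_eq_C_mul]
    refine Submodule.smul_mem _ _ ?_
    induction k with
    | zero => rwa [pow_zero, one_mul]
    | succ k ih => rw [pow_succ', mul_assoc]; exact theta_mul_mem_etaSpan hm ih

theorem T_one_pow_mul_thetaEta (m : ℕ) (G : R[X]) (i : ℕ) :
    LaurentPolynomial.T 1 ^ (i + 1) * thetaEta m G i =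
      toLaurent ((1 + X) ^ ((m + 1) * (i / m)) * ((1 + X) * G) ^ (i % m + 1)) := by
  rw [map_mul, map_pow _ ((1 + X) * G), ← T_one_mul_etaLaurent, pow_mul, map_pow,
    map_pow _ (1 + X) (m + 1), ← T_one_pow_mul_theta, thetaEta,
    show i + 1 = m * (i / m) + (i % m + 1) by rw [← add_assoc, Nat.div_add_mod]]
  ring

/-- The `thetaEta m G i` have lowest terms in distinct degrees, all negative. -/
theorem eq_zero_of_toLaurent_eq_mul_sum (G : R[X]ˣ) {x p : R[X]} (hx : x.coeff 0 = 1) (k : ℕ)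
    (c : ℕ → R)
    (h : toLaurent p = toLaurent x * ∑ i ∈ Finset.range k, c i • thetaEta m (G : R[X]) i) :
    p = 0 := by
  induction k with
  | zero => exact toLaurent_injective (by simpa using h)
  | succ k ih =>
    let w (i : ℕ) : R[X] := (1 + X) ^ ((m + 1) * (i / m)) * ((1 + X) * (G : R[X])) ^ (i % m + 1)
    have hpw : X ^ (k + 1) * p =
        x * ∑ i ∈ Finset.range (k + 1), C (c i) * X ^ (k - i) * w i := by
      apply toLaurent_injective
      rw [map_mul, map_mul, h, map_sum, mul_left_comm, Finset.mul_sum]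
      congr 1
      refine Finset.sum_congr rfl fun i hi => ?_
      obtain ⟨l, rfl⟩ := Nat.exists_eq_add_of_le (Nat.lt_succ_iff.1 (Finset.mem_range.1 hi))
      rw [map_mul _ _ (w i), ← T_one_pow_mul_thetaEta m, map_mul, map_pow, map_pow, toLaurent_X,
        toLaurent_C, LaurentPolynomial.smul_eq_C_mul, Nat.add_sub_cancel_left]
      ring
    have hw : IsUnit ((w k).coeff 0) := by
      have hG : IsUnit (constantCoeff (G : R[X])) := G.isUnit.map _
      simpa [w, mul_coeff_zero, coeff_zero_eq_eval_zero] using hG.pow (k % m + 1)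
    have hc := congrArg (coeff · 0) hpw
    simp only [mul_coeff_zero, finsetSum_coeff, hx, one_mul] at hc
    rw [Finset.sum_range_succ, Finset.sum_eq_zero fun i hi => by
      rw [coeff_X_pow, if_neg (Nat.sub_ne_zero_of_lt (Finset.mem_range.1 hi)).symm, mul_zero,
        zero_mul]] at hc
    have hck : c k = 0 := hw.mul_left_eq_zero.1 (by simpa using hc.symm)
    exact ih (by rw [h, Finset.sum_range_succ, hck, zero_smul, add_zero])

theorem eq_zero_of_toLaurent_eq_mul (G : R[X]ˣ) {x p : R[X]} (hx : x.coeff 0 = 1)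
    {y : LaurentPolynomial R} (hy : y ∈ etaSpan m (G : R[X]))
    (h : toLaurent p = toLaurent x * y) : p = 0 := by
  obtain ⟨c, hc⟩ := Finsupp.mem_span_range_iff_exists_finsupp.1 hy
  refine eq_zero_of_toLaurent_eq_mul_sum (m := m) G hx (c.support.sup id + 1) c ?_
  rw [h, ← hc, Finsupp.sum_of_support_subset _ (fun i hi => ?_) _ (by simp)]
  exact Finset.mem_range.2 (Nat.lt_succ_of_le (Finset.le_sup (f := id) hi))

theorem toLaurent_mulDivX_pow_sub_mem (G : R[X]) {k : ℕ} (hk : k ≤ m) (s : R[X]) :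
    toLaurent ((mulDivX ((1 + X) * G) ^ k) s) - toLaurent s * etaLaurent G ^ k ∈
      etaSpan m G := by
  induction k generalizing s with
  | zero => simp
  | succ k ih =>
    have hη := (etaSpan m G).smul_mem (s.coeff 0) (etaLaurent_pow_mem_etaSpan G hk)
    convert sub_mem (ih (k.le_succ.trans hk) (mulDivX ((1 + X) * G) s)) hη using 1
    rw [pow_succ, Module.End.mul_apply, toLaurent_mulDivX, LaurentPolynomial.smul_eq_C_mul]
    ring

/-- The polynomial in `u` to which the catalytic series specializes. -/
noncomputable def seed (m : ℕ) (G : R[X]ˣ) : R[X] :=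
  C ((G : R[X]).coeff 0 ^ m) * ((1 + X) * (↑G⁻¹ : R[X]) ^ m)

theorem coeff_zero_mul_coeff_zero_inv (G : R[X]ˣ) :
    (G : R[X]).coeff 0 * (↑G⁻¹ : R[X]).coeff 0 = 1 := by
  rw [← mul_coeff_zero, G.mul_inv, coeff_one_zero]

theorem coeff_zero_seed (m : ℕ) (G : R[X]ˣ) : (seed m G).coeff 0 = 1 := by
  rw [seed, mul_coeff_zero, mul_coeff_zero, coeff_C_zero, coeff_zero_eq_eval_zero (_ ^ m), eval_pow,
    ← coeff_zero_eq_eval_zero, coeff_add, coeff_one_zero, coeff_X_zero, add_zero, one_mul,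
    ← mul_pow, coeff_zero_mul_coeff_zero_inv, one_pow]

theorem toLaurent_seed_mul (m : ℕ) (G : R[X]ˣ) :
    toLaurent (seed m G) * etaLaurent (G : R[X]) ^ m =
      LaurentPolynomial.C ((G : R[X]).coeff 0 ^ m) * theta R m := by
  have hG : toLaurent (G : R[X]) ^ m * toLaurent (↑G⁻¹ : R[X]) ^ m = 1 := by
    rw [← mul_pow, ← map_mul, G.mul_inv, map_one, one_pow]
  rw [seed, etaLaurent, map_mul, map_mul, map_pow toLaurent, toLaurent_C, toLaurent_one_add_X,
    theta_eq, mul_pow]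
  linear_combination LaurentPolynomial.C ((G : R[X]).coeff 0 ^ m) * LaurentPolynomial.T 1 *
    toLaurentInv (1 + X) ^ (m + 1) * hG

/-- An operator on polynomials in `u` acting on the multiples of `seed m G` as multiplication by
`θ`, up to multiples of `seed m G` by elements of `etaSpan m G`. -/
noncomputable def thetaOp (m : ℕ) (G : R[X]ˣ) : Module.End R R[X] :=
  LinearMap.mulLeft R (C ((↑G⁻¹ : R[X]).coeff 0 ^ m) * seed m G) *
    mulDivX ((1 + X) * (G : R[X])) ^ m

theorem thetaOp_apply (m : ℕ) (G : R[X]ˣ) (s : R[X]) : thetaOp m G s =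
    C ((↑G⁻¹ : R[X]).coeff 0 ^ m) * seed m G * (mulDivX ((1 + X) * (G : R[X])) ^ m) s := rfl

theorem C_coeff_zero_pow_mul_inv (m : ℕ) (G : R[X]ˣ) :
    (LaurentPolynomial.C ((G : R[X]).coeff 0 ^ m) *
      LaurentPolynomial.C ((↑G⁻¹ : R[X]).coeff 0 ^ m) : LaurentPolynomial R) = 1 := by
  rw [← map_mul, ← mul_pow, coeff_zero_mul_coeff_zero_inv, one_pow, map_one]

theorem exists_toLaurent_thetaOp_eq (m : ℕ) (G : R[X]ˣ) (s : R[X]) :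
    ∃ y ∈ etaSpan m (G : R[X]), toLaurent (thetaOp m G s) =
      theta R m * toLaurent s + toLaurent (seed m G) * y := by
  refine ⟨_, (etaSpan m _).smul_mem ((↑G⁻¹ : R[X]).coeff 0 ^ m)
    (toLaurent_mulDivX_pow_sub_mem (G : R[X]) le_rfl s), ?_⟩
  rw [thetaOp_apply, map_mul, map_mul, LaurentPolynomial.smul_eq_C_mul, toLaurent_C]
  linear_combination LaurentPolynomial.C ((↑G⁻¹ : R[X]).coeff 0 ^ m) * toLaurent s *
    toLaurent_seed_mul m G + theta R m * toLaurent s * C_coeff_zero_pow_mul_inv m G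

theorem exists_toLaurent_thetaOp_pow_seed_eq (hm : m ≠ 0) (G : R[X]ˣ) (i : ℕ) :
    ∃ y ∈ etaSpan m (G : R[X]), toLaurent ((thetaOp m G ^ i) (seed m G)) =
      toLaurent (seed m G) * (theta R m ^ i + y) := by
  induction i with
  | zero => exact ⟨0, zero_mem _, by simp⟩
  | succ i ih =>
    obtain ⟨y, hy, h⟩ := ih
    obtain ⟨z, hz, hz'⟩ := exists_toLaurent_thetaOp_eq m G ((thetaOp m G ^ i) (seed m G))
    refine ⟨theta R m * y + z, add_mem (theta_mul_mem_etaSpan hm hy) hz, ?_⟩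
    rw [pow_succ', Module.End.mul_apply, hz', h]
    ring

theorem exists_toLaurent_aeval_thetaOp_seed_eq (hm : m ≠ 0) (G : R[X]ˣ) (p : R[X]) :
    ∃ y ∈ etaSpan m (G : R[X]), toLaurent (aeval (thetaOp m G) p (seed m G)) =
      toLaurent (seed m G) * (evalTheta m p + y) := by
  induction p using Polynomial.induction_on' with
  | add p q hp hq =>
    obtain ⟨y, hy, hy'⟩ := hp
    obtain ⟨z, hz, hz'⟩ := hq
    refine ⟨y + z, add_mem hy hz, ?_⟩
    rw [map_add, LinearMap.add_apply, map_add, hy', hz', map_add]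
    ring
  | monomial k r =>
    obtain ⟨y, hy, hy'⟩ := exists_toLaurent_thetaOp_pow_seed_eq hm G k
    refine ⟨r • y, Submodule.smul_mem _ _ hy, ?_⟩
    rw [aeval_monomial, ← Algebra.smul_def, LinearMap.smul_apply, smul_eq_C_mul, map_mul, hy',
      ← C_mul_X_pow_eq_monomial, map_mul, map_pow, toLaurent_C, evalTheta_C, evalTheta_X,
      LaurentPolynomial.smul_eq_C_mul]
    ring

namespace IsBirkhoffFactorization

variable [Nontrivial R] {H G K : R[X]ˣ} (hf : IsBirkhoffFactorization m H G K)

include hf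

theorem exists_toLaurent_mulDivX_seed_eq (hm : m ≠ 0) :
    ∃ y ∈ etaSpan m (G : R[X]), toLaurent (mulDivX ((1 + X) * (G : R[X])) (seed m G)) =
      toLaurent (seed m G) * (evalTheta m (H : R[X]) + y) := by
  obtain ⟨d, hd⟩ := hf.exists_etaLaurent_pow_add_eq_zero hm
  set η := etaLaurent (G : R[X]) with hη
  set y := ∑ j ∈ Finset.range m, evalTheta m (d j) * η ^ (j + 1)
  set c := (↑G⁻¹ : R[X]).coeff 0 ^ m with hc
  have hηseed : η = -toLaurent (seed m G) *
      (LaurentPolynomial.C c * y + evalTheta m (H : R[X])) := by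
    apply theta_mul_left_cancel (m := m)
    have h := toLaurent_seed_mul m G
    have h' := C_coeff_zero_pow_mul_inv m G
    rw [← hη] at h
    rw [← hc] at h'
    linear_combination toLaurent (seed m G) * LaurentPolynomial.C c * hd -
      LaurentPolynomial.C c * η * h -
      (theta R m * η + theta R m * evalTheta m (H : R[X]) * toLaurent (seed m G)) * h'
  refine ⟨η + c • y, add_mem ?_ (Submodule.smul_mem _ _ (sum_mem fun j hj => ?_)), ?_⟩
  · simpa using etaLaurent_pow_mem_etaSpan (G : R[X]) (Nat.pos_of_ne_zero hm)
  · exact evalTheta_mul_mem_etaSpan hm _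
      (etaLaurent_pow_mem_etaSpan (G : R[X]) (Finset.mem_range.1 hj))
  · rw [toLaurent_mulDivX, coeff_zero_seed, map_one, LaurentPolynomial.smul_eq_C_mul, ← hη]
    linear_combination -hηseed

theorem aeval_thetaOp_seed (hm : m ≠ 0) :
    aeval (thetaOp m G) (H : R[X]) (seed m G) = mulDivX ((1 + X) * (G : R[X])) (seed m G) := by
  obtain ⟨y, hy, hy'⟩ := exists_toLaurent_aeval_thetaOp_seed_eq hm G (H : R[X])
  obtain ⟨z, hz, hz'⟩ := hf.exists_toLaurent_mulDivX_seed_eq hm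
  refine sub_eq_zero.1 (eq_zero_of_toLaurent_eq_mul G (coeff_zero_seed m G) (sub_mem hy hz) ?_)
  rw [map_sub, hy', hz']
  ring

theorem exists_isSolution (hm : m ≠ 0) {h : ℕ → R} {z : R}
    (hH : ∀ i, (H : R[X]).coeff i = h i * z ^ i) {M : ℕ} (hM : ∀ i, M ≤ i → h i = 0) :
    ∃ Y Z, IsSolution (z * (↑G⁻¹ : R[X]).coeff 0 ^ m) h m Y Z ∧
      Y 1 = (G : R[X]).coeff 0 * (seed m G).coeff 1 := by
  let S (r : ℕ) : R[X] :=
    ∑ i ∈ Finset.range (M + 1), (h (r + i) * z ^ i) • (thetaOp m G ^ i) (seed m G)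
  have hdeg : (H : R[X]).natDegree < M + 1 := Nat.lt_succ_of_le <|
    natDegree_le_iff_coeff_eq_zero.2 fun k hk => by rw [hH, hM k hk.le, zero_mul]
  have hS₀ : mulDivX ((1 + X) * (G : R[X])) (seed m G) = S 0 := by
    rw [← hf.aeval_thetaOp_seed hm, aeval_eq_sum_range' hdeg, LinearMap.sum_apply]
    exact Finset.sum_congr rfl fun i _ => by rw [LinearMap.smul_apply, hH, zero_add]
  have hS (r : ℕ) : S r = C (h r) * seed m G + C z * thetaOp m G (S (r + 1)) := by
    simp only [S, map_sum, map_smul, Finset.mul_sum]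
    rw [Finset.sum_range_succ', Finset.sum_range_succ (n := M), hM (r + 1 + M) (by omega),
      add_comm (Finset.sum _ _)]
    simp only [add_zero, pow_zero, mul_one, Module.End.one_apply, zero_mul, zero_smul, mul_zero,
      smul_eq_C_mul]
    congr 1
    refine Finset.sum_congr rfl fun i _ => ?_
    rw [pow_succ' (thetaOp m G), Module.End.mul_apply, add_right_comm, add_assoc r, pow_succ',
      C_mul, C_mul, C_mul]
    ring
  refine ⟨_, _, (isTwistedDerivation_mulDivX ((1 + X) * (G : R[X]))).isSolution
    (x := seed m G) (S := S) (coeff_zero_seed m G) hS₀ fun r => ?_, ?_⟩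
  · rw [hS, thetaOp_apply, C_mul, Module.End.pow_apply]
    simp only [mul_assoc, LinearMap.toAddMonoidHom_coe]
  · simp [mulDivX_apply, mul_coeff_zero, coeff_divX]

end IsBirkhoffFactorization

end ExplicitSolution

/-! ### Square-zero weights -/

section SquareZero

variable {ι S : Type*} [CommRing S]

theorem one_add_pow_of_sq_eq_zero {a : S} (ha : a ^ 2 = 0) (k : ℕ) :
    (1 + a) ^ k = 1 + k * a := by
  induction k with
  | zero => simp
  | succ k ih => rw [pow_succ, ih]; push_cast; linear_combination (k : S) * ha

theorem one_sub_pow_of_sq_eq_zero {a : S} (ha : a ^ 2 = 0) (k : ℕ) :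
    (1 - a) ^ k = 1 - k * a := by
  rw [sub_eq_add_neg, one_add_pow_of_sq_eq_zero (by rw [neg_sq, ha]), mul_neg, sub_eq_add_neg]

theorem prod_one_add_mul_prod_one_sub (s : Finset ι) {a : ι → S} (ha : ∀ i, a i ^ 2 = 0) :
    (∏ i ∈ s, (1 + a i)) * ∏ i ∈ s, (1 - a i) = 1 := by
  rw [← Finset.prod_mul_distrib]
  exact Finset.prod_eq_one fun i _ => by linear_combination -ha i

/-- The product of the `1 + a i`, as a unit with inverse the product of the `1 - a i`, for a family
of elements of square zero. -/
@[simps]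
def prodOneAddUnit [Fintype ι] (a : ι → S) (ha : ∀ i, a i ^ 2 = 0) : Sˣ where
  val := ∏ i, (1 + a i)
  inv := ∏ i, (1 - a i)
  val_inv := prod_one_add_mul_prod_one_sub _ ha
  inv_val := by rw [mul_comm, prod_one_add_mul_prod_one_sub _ ha]

open Polynomial in
theorem coeff_one_prod_one_add (s : Finset ι) {x : ι → S} (hx : ∀ i, x i ^ 2 = 0) (p : ι → S[X]) :
    (∏ i ∈ s, (1 + C (x i) * p i)).coeff 1 =
      (∏ i ∈ s, (1 + C (x i) * p i)).coeff 0 * ∑ i ∈ s, x i * (p i).coeff 1 := by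
  classical
  induction s using Finset.induction_on with
  | empty => simp [coeff_one]
  | insert i s hi ih =>
    rw [Finset.prod_insert hi, Finset.sum_insert hi, mul_coeff_one, mul_coeff_zero, ih]
    simp only [coeff_add, coeff_C_mul, coeff_one, one_ne_zero, if_true, if_false]
    linear_combination -(p i).coeff 0 * (p i).coeff 1 *
      (∏ i ∈ s, (1 + C (x i) * p i)).coeff 0 * hx i

end SquareZero

section ThetaPow

open Polynomial

variable (R : Type*) [CommRing R]

/-- The part of `θ ^ l` of nonnegative degree in `u`. -/
noncomputable def thetaPos (m l : ℕ) : R[X] :=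
  ∑ j ∈ Finset.range (l + 1), C (((m + 1) * l).choose (m * l + j) : R) * X ^ j

/-- The part of `θ ^ l` of negative degree in `u`, as a polynomial in `1 / u`. -/
noncomputable def thetaNeg (m l : ℕ) : R[X] :=
  ∑ j ∈ Finset.range (m * l), C (((m + 1) * l).choose j : R) * X ^ (m * l - j)

theorem theta_pow (m l : ℕ) :
    theta R m ^ l = toLaurent (thetaPos R m l) + toLaurentInv (thetaNeg R m l) := by
  have hT (k : ℕ) : (LaurentPolynomial.T 1 ^ k * LaurentPolynomial.T (-1) ^ k :
      LaurentPolynomial R) = 1 := by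
    rw [← mul_pow, T_one_mul_T_neg_one, one_pow]
  rw [theta, mul_pow, ← pow_mul, ← pow_mul, ← map_pow, add_comm 1 X, add_pow,
    show (m + 1) * l + 1 = m * l + (l + 1) by ring, Finset.sum_range_add, add_comm, map_add,
    add_mul, thetaPos, thetaNeg]
  simp only [map_sum, Finset.sum_mul, one_pow, mul_one, map_mul, map_pow, map_natCast,
    toLaurent_X, toLaurentInv_X]
  congr 1
  · refine Finset.sum_congr rfl fun j _ => ?_
    rw [pow_add]
    linear_combination (LaurentPolynomial.T 1 ^ j *
      (((m + 1) * l).choose (m * l + j) : LaurentPolynomial R)) * hT (m * l)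
  · refine Finset.sum_congr rfl fun j hj => ?_
    obtain ⟨k, hk⟩ := Nat.exists_eq_add_of_le (Finset.mem_range.1 hj).le
    rw [hk, Nat.add_sub_cancel_left, pow_add]
    linear_combination (LaurentPolynomial.T (-1) ^ k *
      (((m + 1) * l).choose j : LaurentPolynomial R)) * hT j

theorem coeff_zero_thetaPos (m l : ℕ) : (thetaPos R m l).coeff 0 = ((m + 1) * l).choose l := by
  rw [thetaPos, finsetSum_coeff, Finset.sum_eq_single 0]
  · rw [pow_zero, mul_one, coeff_C_zero, add_zero,
      Nat.choose_symm_of_eq_add (show (m + 1) * l = m * l + l by ring)]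
  · intro j _ hj
    rw [coeff_C_mul, coeff_X_pow, if_neg hj.symm, mul_zero]
  · simp

theorem coeff_one_thetaPos (m l : ℕ) :
    (thetaPos R m l).coeff 1 = ((m + 1) * l).choose (m * l + 1) := by
  simp only [thetaPos, finsetSum_coeff, coeff_C_mul, coeff_X_pow, mul_ite, mul_one, mul_zero,
    Finset.sum_ite_eq, Finset.mem_range]
  rcases l with _ | l
  · simp
  · simp

theorem coeff_zero_thetaNeg (m l : ℕ) : (thetaNeg R m l).coeff 0 = 0 := by
  rw [thetaNeg, finsetSum_coeff]
  refine Finset.sum_eq_zero fun j hj => ?_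
  rw [coeff_C_mul, coeff_X_pow, if_neg (by have := Finset.mem_range.1 hj; omega), mul_zero]

end ThetaPow

section BirkhoffFactorization

open Polynomial

variable {R ι : Type*} [CommRing R] [Fintype ι] {x : ι → R} (hx : ∀ c, x c ^ 2 = 0)

/-- The unit `∏ (1 + x c * p c)` of `R[X]`, for a family `x` of elements of square zero. -/
noncomputable def sqZeroUnit (p : ι → R[X]) : R[X]ˣ :=
  prodOneAddUnit (fun c => C (x c) * p c) fun c => by rw [mul_pow, ← C_pow, hx, C_0, zero_mul]

theorem val_sqZeroUnit (p : ι → R[X]) :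
    (sqZeroUnit hx p : R[X]) = ∏ c, (1 + C (x c) * p c) := rfl

theorem val_inv_sqZeroUnit_pow (p : ι → R[X]) (m : ℕ) :
    (↑(sqZeroUnit hx p)⁻¹ : R[X]) ^ m = ∏ c, (1 + C (x c) * (-m * p c)) := by
  rw [sqZeroUnit, val_inv_prodOneAddUnit, ← Finset.prod_pow]
  refine Finset.prod_congr rfl fun c _ => ?_
  rw [one_sub_pow_of_sq_eq_zero (by rw [mul_pow, ← C_pow, hx, C_0, zero_mul])]
  ring

theorem coeff_zero_prod_one_add (x : ι → R) (p : ι → R[X]) :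
    (∏ c, (1 + C (x c) * p c)).coeff 0 = ∏ c, (1 + x c * (p c).coeff 0) := by
  simp only [coeff_zero_eq_eval_zero, eval_prod, eval_add, eval_one, eval_mul, eval_C]

theorem coeff_one_seed_sqZeroUnit (p : ι → R[X]) (m : ℕ) :
    (seed m (sqZeroUnit hx p)).coeff 1 = 1 - m * ∑ c, (p c).coeff 1 * x c := by
  have hzero := coeff_zero_seed m (sqZeroUnit hx p)
  rw [seed, val_inv_sqZeroUnit_pow, coeff_C_mul, mul_coeff_zero] at hzero
  rw [seed, val_inv_sqZeroUnit_pow, coeff_C_mul, mul_coeff_one, coeff_one_prod_one_add _ hx]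
  have hsum : ∑ c, x c * (-m * p c).coeff 1 = -(m * ∑ c, (p c).coeff 1 * x c) := by
    rw [Finset.mul_sum, ← Finset.sum_neg_distrib]
    refine Finset.sum_congr rfl fun c _ => ?_
    rw [← C_eq_natCast, ← C_neg, coeff_C_mul]
    ring
  simp only [coeff_add, coeff_X_zero, coeff_X_one, coeff_one, one_ne_zero,
    if_true, if_false, hsum] at hzero ⊢
  linear_combination (1 - m * ∑ c, (p c).coeff 1 * x c) * hzero

theorem isBirkhoffFactorization_sqZeroUnit (m : ℕ) (l : ι → ℕ) :
    IsBirkhoffFactorization m (sqZeroUnit hx fun c => X ^ l c)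
      (sqZeroUnit hx fun c => thetaPos R m (l c)) (sqZeroUnit hx fun c => thetaNeg R m (l c)) where
  evalTheta_eq := by
    simp only [val_sqZeroUnit, map_prod, ← Finset.prod_mul_distrib]
    refine Finset.prod_congr rfl fun c _ => ?_
    have hC : (LaurentPolynomial.C (x c)) ^ 2 = 0 := by rw [← map_pow, hx, map_zero]
    simp only [map_add, map_mul, map_one, map_pow, evalTheta_X, evalTheta_C, toLaurent_C,
      toLaurentInv_C, theta_pow]
    linear_combination
      -toLaurent (thetaPos R m (l c)) * toLaurentInv (thetaNeg R m (l c)) * hC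
  coeff_zero := by
    rw [val_sqZeroUnit, coeff_zero_prod_one_add]
    exact Finset.prod_eq_one fun c _ => by rw [coeff_zero_thetaNeg, mul_zero, add_zero]

include hx in
theorem exists_isSolution_of_sq_eq_zero [Nontrivial R] {m : ℕ} (hm : m ≠ 0) (l : ι → ℕ)
    {h : ℕ → R} {z : R} (hcoeff : ∀ i, (∏ c, (1 + C (x c) * X ^ l c)).coeff i = h i * z ^ i)
    {M : ℕ} (hM : ∀ i, M ≤ i → h i = 0) :
    ∃ Y Z, IsSolution (z * ∏ c, (1 - m * (((m + 1) * l c).choose (l c) * x c))) h m Y Z ∧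
      Y 1 = (∏ c, (1 + ((m + 1) * l c).choose (l c) * x c)) *
        (1 - m * ∑ c, ((m + 1) * l c).choose (m * l c + 1) * x c) := by
  obtain ⟨Y, Z, hYZ, hY⟩ :=
    (isBirkhoffFactorization_sqZeroUnit hx m l).exists_isSolution hm hcoeff hM
  have hinv : (↑(sqZeroUnit hx fun c => thetaPos R m (l c))⁻¹ : R[X]).coeff 0 ^ m =
      ∏ c, (1 - m * (((m + 1) * l c).choose (l c) * x c)) := by
    rw [← constantCoeff_apply, ← map_pow, val_inv_sqZeroUnit_pow, constantCoeff_apply,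
      coeff_zero_prod_one_add]
    refine Finset.prod_congr rfl fun c _ => ?_
    rw [mul_coeff_zero, coeff_zero_thetaPos, ← C_eq_natCast, ← C_neg, coeff_C_zero]
    ring
  refine ⟨Y, Z, hinv ▸ hYZ, ?_⟩
  simp only [hY, coeff_one_seed_sqZeroUnit, val_sqZeroUnit, coeff_zero_prod_one_add,
    coeff_zero_thetaPos, coeff_one_thetaPos, mul_comm (x _)]

end BirkhoffFactorization

/-! ### Coefficient extraction -/

section Abel

open Polynomial

variable {ι : Type*}

theorem sum_powerset_neg_one_pow_mul_eval {R : Type*} [CommRing R] (w : ι → R) (U : Finset ι) :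
    ∀ {p : R[X]} (b : R), p.degree < U.card →
      ∑ S ∈ U.powerset, (-1) ^ S.card * p.eval (b + ∑ c ∈ S, w c) = 0 := by
  classical
  induction U using Finset.induction_on with
  | empty =>
    intro p b hp
    obtain rfl : p = 0 := by
      rw [← degree_eq_bot, ← Nat.WithBot.lt_zero_iff]
      exact hp
    simp
  | insert a U ha ih =>
    intro p b hp
    rcases eq_or_ne p 0 with rfl | hp0
    · simp
    have hlt : (p - taylor (w a) p).degree < U.card := by
      refine (degree_sub_lt_left (degree_taylor ..).symm hp0
        (leadingCoeff_taylor ..).symm).trans_le ?_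
      rw [Finset.card_insert_of_notMem ha, degree_eq_natDegree hp0] at hp
      rw [degree_eq_natDegree hp0]
      exact_mod_cast Nat.lt_succ_iff.1 (by exact_mod_cast hp)
    rw [Finset.sum_powerset_insert ha, ← ih b hlt, ← Finset.sum_add_distrib]
    refine Finset.sum_congr rfl fun S hS => ?_
    have haS : a ∉ S := fun h => ha (Finset.mem_powerset.1 hS h)
    rw [Finset.card_insert_of_notMem haS, Finset.sum_insert haS, eval_sub, taylor_eval, pow_succ,
      ← add_assoc, add_right_comm]
    ring

theorem sum_finset_eq_add_sum_singleton {M : Type*} [AddCommMonoid M] [Fintype ι]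
    {f : Finset ι → M} (hf : ∀ S, 2 ≤ S.card → f S = 0) : ∑ S, f S = f ∅ + ∑ c, f {c} := by
  classical
  have hempty : ∅ ∉ Finset.univ.image (singleton : ι → Finset ι) := by simp
  rw [← Finset.sum_image fun c _ d _ => Finset.singleton_inj.1, ← Finset.sum_insert hempty]
  refine (Finset.sum_subset (Finset.subset_univ _) fun S _ hS => hf S ?_).symm
  by_contra! hcard
  refine hS ?_
  rcases Nat.le_one_iff_eq_zero_or_eq_one.1 (Nat.le_of_lt_succ hcard) with h | h
  · rw [Finset.card_eq_zero.1 h]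
    exact Finset.mem_insert_self _ _
  · obtain ⟨c, rfl⟩ := Finset.card_eq_one.1 h
    exact Finset.mem_insert_of_mem (Finset.mem_image_of_mem _ (Finset.mem_univ c))

section Coefficients

variable [DecidableEq ι] {F : Type*} [Field F] {w : ι → F}

/-- The coefficient of `∏ c ∈ U, y c` in the expansion of the sum in Abel's identity
`sum_pow_mul_prod_of_sq_eq_zero`, up to the factor `∏ c, (1 + y c)`. -/
def abelCoeff (w : ι → F) (U : Finset ι) : F :=
  ∑ S ∈ U.powerset, (-1) ^ (U \ S).card * (1 + ∑ c ∈ S, w c) ^ ((U.card : ℤ) - 2)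

theorem abelCoeff_empty (w : ι → F) : abelCoeff w ∅ = 1 := by simp [abelCoeff]

theorem abelCoeff_singleton {c : ι} (hc : 1 + w c ≠ 0) :
    abelCoeff w {c} = -(w c / (1 + w c)) := by
  have hsub : abelCoeff w {c} = -1 + (1 + w c)⁻¹ := by
    rw [abelCoeff, ← insert_empty_eq, Finset.sum_powerset_insert (Finset.notMem_empty c)]
    simp
  rw [hsub]
  field_simp
  ring

theorem abelCoeff_eq_zero (w : ι → F) {U : Finset ι} (hU : 2 ≤ U.card) : abelCoeff w U = 0 := by
  obtain ⟨k, hk⟩ := Nat.exists_eq_add_of_le' hU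
  have hsum := sum_powerset_neg_one_pow_mul_eval w U (p := X ^ k) 1
    ((degree_X_pow_le k).trans_lt (by rw [hk]; exact_mod_cast (by omega)))
  rw [abelCoeff, ← mul_zero ((-1) ^ U.card), ← hsum, Finset.mul_sum]
  refine Finset.sum_congr rfl fun S hS => ?_
  have hsign : (-1 : F) ^ U.card * (-1) ^ S.card = (-1) ^ (U \ S).card := by
    rw [← Finset.card_sdiff_add_card_eq_card (Finset.mem_powerset.1 hS), pow_add, mul_assoc,
      ← mul_pow, neg_mul_neg, one_mul, one_pow, mul_one]
  rw [eval_pow, eval_X, ← mul_assoc, hsign, hk, Nat.cast_add, Nat.cast_ofNat, add_sub_cancel_right,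
    zpow_natCast]

end Coefficients

variable {F K : Type*} [Field F] [CommRing K] [Algebra F K] {y : ι → K}

theorem prod_mul_prod_one_sub [Fintype ι] [DecidableEq ι] (hy : ∀ c, y c ^ 2 = 0)
    (S : Finset ι) (b : K) :
    (∏ c ∈ S, y c) * ∏ c, (1 - b * y c) =
      ∑ U ∈ Finset.Icc S Finset.univ, (-b) ^ (U \ S).card * ∏ c ∈ U, y c := by
  have hS : (∏ c ∈ S, y c) * ∏ c ∈ S, (1 - b * y c) = ∏ c ∈ S, y c := by
    rw [← Finset.prod_mul_distrib]
    exact Finset.prod_congr rfl fun c _ => by linear_combination -b * hy c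
  have hdisj {V : Finset ι} (hV : V ∈ (Finset.univ \ S).powerset) : Disjoint S V :=
    Finset.disjoint_of_subset_right (Finset.mem_powerset.1 hV) Finset.disjoint_sdiff
  rw [Finset.Icc_eq_image_powerset (Finset.subset_univ S), Finset.sum_image]
  · rw [← Finset.prod_sdiff (Finset.subset_univ S), mul_comm (∏ c ∈ Finset.univ \ S, _),
      ← mul_assoc, hS]
    simp only [sub_eq_add_neg, ← neg_mul, Finset.prod_one_add, Finset.mul_sum]
    refine Finset.sum_congr rfl fun V hV => ?_
    rw [Finset.prod_mul_distrib, Finset.prod_const, Finset.prod_union (hdisj hV),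
      Finset.union_sdiff_cancel_left (hdisj hV), mul_left_comm]
  · intro V hV W hW h
    simpa [Finset.union_sdiff_cancel_left (hdisj hV), Finset.union_sdiff_cancel_left (hdisj hW)]
      using congrArg (· \ S) h

theorem sum_pow_mul_prod_eq_sum_abelCoeff [Fintype ι] [DecidableEq ι]
    (hy : ∀ c, y c ^ 2 = 0) {w : ι → F}
    (hw : ∀ S : Finset ι, 1 + ∑ c ∈ S, w c ≠ 0) :
    ∑ S : Finset ι, algebraMap F K ((1 + ∑ c ∈ S, w c) ^ ((S.card : ℤ) - 2)) *
      ((∏ c ∈ S, y c) * ∏ c, (1 - algebraMap F K (1 + ∑ c ∈ S, w c) * y c)) =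
    ∑ U : Finset ι, algebraMap F K (abelCoeff w U) * ∏ c ∈ U, y c := by
  simp only [prod_mul_prod_one_sub hy, Finset.mul_sum, abelCoeff, map_sum, Finset.sum_mul]
  rw [Finset.sum_comm' (t' := Finset.univ) (s' := Finset.powerset) (by simp)]
  refine Finset.sum_congr rfl fun U _ => Finset.sum_congr rfl fun S hS => ?_
  rw [← mul_assoc, ← map_neg, ← map_pow, ← map_mul]
  congr 2
  rw [neg_pow, mul_left_comm, ← zpow_natCast (1 + ∑ c ∈ S, w c), ← zpow_add₀ (hw S)]
  have := Finset.card_sdiff_add_card_eq_card (Finset.mem_powerset.1 hS)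
  congr 2
  omega

theorem sum_pow_mul_prod_of_sq_eq_zero [Fintype ι] (hy : ∀ c, y c ^ 2 = 0) {w : ι → F}
    (hw : ∀ S : Finset ι, 1 + ∑ c ∈ S, w c ≠ 0) :
    ∑ S : Finset ι, algebraMap F K ((1 + ∑ c ∈ S, w c) ^ ((S.card : ℤ) - 2)) *
      ((∏ c ∈ S, y c) * ∏ c, (1 - algebraMap F K (∑ c ∈ S, w c) * y c)) =
    (∏ c, (1 + y c)) * (1 - ∑ c, algebraMap F K (w c / (1 + w c)) * y c) := by
  classical
  have hfactor (a : F) : ∏ c, (1 - algebraMap F K a * y c) =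
      (∏ c, (1 + y c)) * ∏ c, (1 - algebraMap F K (1 + a) * y c) := by
    rw [← Finset.prod_mul_distrib, map_add, map_one]
    exact Finset.prod_congr rfl fun c _ => by
      linear_combination (1 + algebraMap F K a) * hy c
  have hsingle (c : ι) : abelCoeff w {c} = -(w c / (1 + w c)) :=
    abelCoeff_singleton (by simpa only [Finset.sum_singleton] using hw {c})
  rw [Finset.sum_congr rfl fun S _ => by
    rw [hfactor, mul_left_comm (∏ c ∈ S, y c), mul_left_comm], ← Finset.mul_sum]
  rw [sum_pow_mul_prod_eq_sum_abelCoeff hy hw, sum_finset_eq_add_sum_singleton fun U hU => by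
    rw [abelCoeff_eq_zero w hU, map_zero, zero_mul]]
  simp only [abelCoeff_empty, hsingle, map_one, Finset.prod_empty, Finset.prod_singleton, mul_one,
    map_neg, neg_mul, Finset.sum_neg_distrib, ← sub_eq_add_neg]

end Abel

section GeneratingSeries

open Polynomial

variable {R ι : Type*} [CommRing R] [Fintype ι]

/-- The polynomial whose coefficient of `X ^ r` is the sum, over the subsets `S` of `ι` with
`∑ c ∈ S, l c = r`, of the monomials `∏ c ∈ S, x c`. -/
noncomputable def subsetPoly (l : ι → ℕ) (x : ι → R) : R[X] := ∏ c, (1 + C (x c) * X ^ l c)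

theorem map_subsetPoly {R' : Type*} [CommRing R'] (φ : R →+* R') (l : ι → ℕ) (x : ι → R) :
    (subsetPoly l x).map φ = subsetPoly l (φ ∘ x) := by
  simp [subsetPoly, Polynomial.map_prod]

theorem coeff_subsetPoly_mul_pow (l : ι → ℕ) (x : ι → R) (z : R) (r : ℕ) :
    (subsetPoly l fun c => x c * z ^ l c).coeff r = (subsetPoly l x).coeff r * z ^ r := by
  have hcomp : (subsetPoly l fun c => x c * z ^ l c) = (subsetPoly l x).comp (C z * X) := by
    simp [subsetPoly, prod_comp, mul_pow, mul_assoc]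
  rw [hcomp, comp_C_mul_X_coeff]

theorem exists_mul_prod_one_sub_eq (l : ι → ℕ) (t : R) {a : ι → R} (ha : ∀ c, a c ^ 2 = 0) :
    ∃ z, z * ∏ c, (1 - a c * z ^ l c) = t := by
  let φ := Ideal.Quotient.mk (nilradical R)
  have hφ {r : R} (hr : φ r = 0) : IsNilpotent r :=
    mem_nilradical.1 (Ideal.Quotient.eq_zero_iff_mem.1 hr)
  have hφa (c : ι) : φ (a c) = 0 :=
    Ideal.Quotient.eq_zero_iff_mem.2 (mem_nilradical.2 ⟨2, ha c⟩)
  let P : R[X] := X * ∏ c, (1 - C (a c) * X ^ l c) - C t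
  have hP : P.map φ = X - C (φ t) := by
    simp [P, Polynomial.map_prod, hφa]
  obtain ⟨z, ⟨-, hz⟩, -⟩ := existsUnique_nilpotent_sub_and_aeval_eq_zero (P := P) (x := t)
    (hφ <| by rw [coe_aeval_eq_eval, ← eval₂_at_apply, ← eval_map, hP]; simp) <| by
      rw [← sub_add_cancel (aeval t (derivative P)) 1]
      refine (hφ ?_).isUnit_add_one
      rw [map_sub, coe_aeval_eq_eval, ← eval₂_at_apply, ← eval_map, ← derivative_map, hP]
      simp
  refine ⟨z, ?_⟩
  simpa [P, eval_prod, sub_eq_zero] using hz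

theorem algebraMap_div_mul_choose (K : Type*) [CommRing K] [Algebra ℚ K] (m l : ℕ) :
    algebraMap ℚ K (m * l / (1 + m * l)) * ((m + 1) * l).choose l =
      m * ((m + 1) * l).choose (m * l + 1) := by
  have hsucc := Nat.choose_succ_right_eq ((m + 1) * l) (m * l)
  have hadd : (m + 1) * l = m * l + l := by ring
  rw [Nat.choose_symm_of_eq_add hadd, show (m + 1) * l - m * l = l by omega] at hsucc
  have hcast : (((m + 1) * l).choose (m * l + 1) : ℚ) * (m * l + 1) =
      ((m + 1) * l).choose l * l := by exact_mod_cast hsucc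
  have hrat : (m * l / (1 + m * l) : ℚ) * ((m + 1) * l).choose l =
      m * ((m + 1) * l).choose (m * l + 1) := by
    field_simp
    linear_combination -m * hcast
  simpa using congrArg (algebraMap ℚ K) hrat

theorem mk_sum_ascentProd_subsetPoly [Nontrivial R] {m : ℕ} (hm : m ≠ 0) (l : ι → ℕ) {x : ι → R}
    (hx : ∀ c, x c ^ 2 = 0) {y : ι → PowerSeries R} {z : PowerSeries R}
    (hy : ∀ c, y c = PowerSeries.C (x c) * z ^ l c)
    (hz : z * ∏ c, (1 - m * (((m + 1) * l c).choose (l c) * y c)) = PowerSeries.X) :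
    (PowerSeries.mk fun n => ∑ p ∈ intervals m 0 n, ascentProd (subsetPoly l x).coeff 0 p.2) =
      (∏ c, (1 + ((m + 1) * l c).choose (l c) * y c)) *
        (1 - m * ∑ c, ((m + 1) * l c).choose (m * l c + 1) * y c) := by
  have hy2 (c : ι) : y c ^ 2 = 0 := by rw [hy, mul_pow, ← map_pow, hx, map_zero, zero_mul]
  have hcoeff (r : ℕ) : (∏ c, (1 + C (y c) * X ^ l c)).coeff r =
      PowerSeries.C ((subsetPoly l x).coeff r) * z ^ r := by
    rw [← coeff_map, map_subsetPoly, ← coeff_subsetPoly_mul_pow, subsetPoly]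
    simp only [hy, Function.comp_apply]
  obtain ⟨Y, Z, hYZ, hY⟩ := exists_isSolution_of_sq_eq_zero hy2 hm l hcoeff
    (M := (subsetPoly l x).natDegree + 1) fun r hr => by
      rw [coeff_eq_zero_of_natDegree_lt hr, map_zero]
  obtain ⟨Y', Z', hYZ', hY'⟩ := exists_isSolution_ascentProd (subsetPoly l x).coeff m
  rw [hz] at hYZ
  rw [← hY', ← hY, hYZ'.unique hYZ]

theorem prod_mul_prod_one_sub_sum_mul {l : ι → ℕ} {a y : ι → R} {t z μ : R}
    (ha : ∀ c, a c ^ 2 = 0) (hy : ∀ c, y c = a c * z ^ l c)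
    (hz : z * ∏ c, (1 - μ * y c) = t) (S : Finset ι) :
    (∏ c ∈ S, y c) * ∏ c, (1 - μ * (∑ c ∈ S, l c : ℕ) * y c) =
      (∏ c ∈ S, a c) * t ^ ∑ c ∈ S, l c := by
  have hpow (c : ι) (k : ℕ) : (1 - μ * y c) ^ k = 1 - μ * k * y c := by
    have hsq : (μ * y c) ^ 2 = 0 := by rw [hy, mul_pow, mul_pow, ha, zero_mul, mul_zero]
    rw [one_sub_pow_of_sq_eq_zero hsq]
    ring
  simp only [← hz, mul_pow, ← Finset.prod_pow, hpow]
  simp only [hy, Finset.prod_mul_distrib, Finset.prod_pow_eq_pow_sum, mul_assoc]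

theorem mk_sum_ascentProd_subsetPoly_eq_sum [Nontrivial R] [Algebra ℚ R] {m : ℕ} (hm : m ≠ 0)
    (l : ι → ℕ) {x : ι → R} (hx : ∀ c, x c ^ 2 = 0) :
    (PowerSeries.mk fun n => ∑ p ∈ intervals m 0 n, ascentProd (subsetPoly l x).coeff 0 p.2) =
      ∑ S : Finset ι, PowerSeries.monomial (∑ c ∈ S, l c)
        (algebraMap ℚ R ((1 + m * (∑ c ∈ S, l c : ℕ)) ^ ((S.card : ℤ) - 2)) *
          ∏ c ∈ S, ((m + 1) * l c).choose (l c) * x c) := by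
  let a (c : ι) : R := ((m + 1) * l c).choose (l c) * x c
  let w (c : ι) : ℚ := m * l c
  have ha (c : ι) : PowerSeries.C (a c) ^ 2 = 0 := by
    rw [← map_pow, mul_pow, hx, mul_zero, map_zero]
  obtain ⟨z, hz⟩ := exists_mul_prod_one_sub_eq l (PowerSeries.X : PowerSeries R)
    (a := fun c => m * PowerSeries.C (a c)) fun c => by rw [mul_pow, ha, mul_zero]
  simp only [mul_assoc] at hz
  let y (c : ι) : PowerSeries R := PowerSeries.C (a c) * z ^ l c
  have hgen := mk_sum_ascentProd_subsetPoly hm l hx (fun c => rfl) (z := z) <| by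
    simpa [a, mul_assoc] using hz
  have habel := sum_pow_mul_prod_of_sq_eq_zero (y := y) (w := w)
    (fun c => by rw [mul_pow, ha, zero_mul]) fun S => by positivity
  have hy (c : ι) : ((m + 1) * l c).choose (l c) * (PowerSeries.C (x c) * z ^ l c) = y c := by
    simp [y, a, mul_assoc]
  have hgamma (c : ι) : algebraMap ℚ (PowerSeries R) (w c / (1 + w c)) * y c =
      m * (((m + 1) * l c).choose (m * l c + 1) * (PowerSeries.C (x c) * z ^ l c)) := by
    rw [← hy, ← mul_assoc, algebraMap_div_mul_choose, mul_assoc]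
  rw [hgen, Finset.mul_sum]
  simp only [hy, ← hgamma, ← habel]
  refine Finset.sum_congr rfl fun S _ => ?_
  have hw : ∑ c ∈ S, w c = m * (∑ c ∈ S, l c : ℕ) := by simp [w, Finset.mul_sum]
  rw [hw, map_mul (algebraMap ℚ (PowerSeries R)) (m : ℚ), map_natCast, map_natCast,
    prod_mul_prod_one_sub_sum_mul ha (fun c => rfl) hz, PowerSeries.algebraMap_apply, ← map_prod,
    ← mul_assoc, ← map_mul, PowerSeries.X_pow_eq, ← PowerSeries.smul_eq_C_mul, ← map_smul,
    smul_eq_mul, mul_one]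

end GeneratingSeries

section MultilinearCoefficient

open Finset Polynomial

variable {ι R : Type*} [Fintype ι] [CommRing R]

/-- The exponent vector `(1, …, 1)`, at which a polynomial has its multilinear coefficient. -/
noncomputable def allOnes (ι : Type*) [Fintype ι] : ι →₀ ℕ := Finsupp.equivFunOnFinite.symm 1

@[simp] theorem allOnes_apply (c : ι) : allOnes ι c = 1 := rfl

theorem coeff_allOnes_prod_prod_X [DecidableEq ι] {J : Type*} (s : Finset J) (φ : J → Finset ι) :
    (∏ j ∈ s, ∏ c ∈ φ j, MvPolynomial.X c : MvPolynomial ι R).coeff (allOnes ι) =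
      if ∀ c, #{j ∈ s | c ∈ φ j} = 1 then 1 else 0 := by
  have hprod : (∏ j ∈ s, ∏ c ∈ φ j, MvPolynomial.X c : MvPolynomial ι R) =
      MvPolynomial.monomial (∑ j ∈ s, ∑ c ∈ φ j, Finsupp.single c 1) 1 := by
    simp only [MvPolynomial.monomial_sum_one]
    rfl
  rw [hprod, MvPolynomial.coeff_monomial]
  simp [DFunLike.ext_iff, Finsupp.finsetSum_apply, Finsupp.single_apply]

theorem coeff_allOnes_prod_X [DecidableEq ι] (S : Finset ι) :
    (∏ c ∈ S, MvPolynomial.X c : MvPolynomial ι R).coeff (allOnes ι) =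
      if S = univ then 1 else 0 := by
  have h := coeff_allOnes_prod_prod_X (R := R) {()} fun _ => S
  simpa [eq_univ_iff_forall, filter_singleton, apply_ite card] using h

/-- The ideal generated by the squares of the variables, modulo which each variable is square-zero
while the multilinear coefficient is still well defined. -/
noncomputable def squareIdeal (ι R : Type*) [CommRing R] : Ideal (MvPolynomial ι R) :=
  Ideal.span (Set.range fun c => MvPolynomial.X c ^ 2)

theorem squareIdeal_ne_top {ι R : Type*} [CommRing R] [Nontrivial R] : squareIdeal ι R ≠ ⊤ := by
  refine ne_top_of_le_ne_top (RingHom.ker_ne_top MvPolynomial.constantCoeff) (Ideal.span_le.2 ?_)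
  rintro _ ⟨c, rfl⟩
  simp

theorem coeff_allOnes_eq_zero_of_mem_squareIdeal {p : MvPolynomial ι R}
    (hp : p ∈ squareIdeal ι R) : p.coeff (allOnes ι) = 0 := by
  by_contra hcoeff
  have hspan : squareIdeal ι R = Ideal.span ((fun s => MvPolynomial.monomial s (1 : R)) ''
      Set.range fun c : ι => Finsupp.single c 2) := by
    simp only [squareIdeal, MvPolynomial.X_pow_eq_monomial, ← Set.range_comp, Function.comp_def]
  rw [hspan, MvPolynomial.mem_ideal_span_monomial_image] at hp
  obtain ⟨_, ⟨c, rfl⟩, hle⟩ := hp _ (MvPolynomial.mem_support_iff.2 hcoeff)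
  simpa using hle c

theorem coeff_allOnes_eq_of_mk_eq {p q : MvPolynomial ι R}
    (h : Ideal.Quotient.mk (squareIdeal ι R) p = Ideal.Quotient.mk (squareIdeal ι R) q) :
    p.coeff (allOnes ι) = q.coeff (allOnes ι) :=
  sub_eq_zero.1 <| (MvPolynomial.coeff_sub ..).symm.trans <|
    coeff_allOnes_eq_zero_of_mem_squareIdeal <| Ideal.Quotient.eq.1 h

theorem map_ascentProd {M N F : Type*} [Mul M] [Mul N] [FunLike F M N] [MulHomClass F M N] (f : F)
    (g : ℕ → M) (r : ℕ) (w : List Step) : f (ascentProd g r w) = ascentProd (f ∘ g) r w := by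
  induction w generalizing r with
  | nil => rfl
  | cons s w ih => cases s <;> simp only [ascentProd, map_mul, ih, Function.comp_apply]

theorem sum_coeff_allOnes_ascentProd {m : ℕ} (hm : m ≠ 0) (l : ι → ℕ) :
    ∑ p ∈ intervals m 0 (∑ c, l c), (ascentProd
        (subsetPoly l (MvPolynomial.X : ι → MvPolynomial ι ℚ)).coeff 0 p.2).coeff (allOnes ι) =
      (1 + m * (∑ c, l c : ℕ)) ^ ((Fintype.card ι : ℤ) - 2) *
        ∏ c, (((m + 1) * l c).choose (l c) : ℚ) := by
  classical
  let π := Ideal.Quotient.mk (squareIdeal ι ℚ)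
  have : Nontrivial (MvPolynomial ι ℚ ⧸ squareIdeal ι ℚ) :=
    Ideal.Quotient.nontrivial_iff.2 squareIdeal_ne_top
  have hx (c : ι) : π (MvPolynomial.X c) ^ 2 = 0 := by
    rw [← map_pow]
    exact Ideal.Quotient.eq_zero_iff_mem.2 (Ideal.subset_span ⟨c, rfl⟩)
  have hcoeff := congrArg (PowerSeries.coeff (∑ c, l c))
    (mk_sum_ascentProd_subsetPoly_eq_sum hm l hx)
  let b (S : Finset ι) : ℚ := if ∑ c, l c = ∑ c ∈ S, l c then
    (1 + m * (∑ c ∈ S, l c : ℕ)) ^ ((#S : ℤ) - 2) * ∏ c ∈ S, ((m + 1) * l c).choose (l c) else 0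
  have hπ : π (∑ p ∈ intervals m 0 (∑ c, l c), ascentProd
        (subsetPoly l (MvPolynomial.X : ι → MvPolynomial ι ℚ)).coeff 0 p.2) =
      π (∑ S, MvPolynomial.C (b S) * ∏ c ∈ S, MvPolynomial.X c) := by
    have hsubset : (subsetPoly l fun c => π (MvPolynomial.X c)).coeff =
        π ∘ (subsetPoly l MvPolynomial.X).coeff := by
      funext r
      rw [Function.comp_apply, ← coeff_map, map_subsetPoly, Function.comp_def]
    have hC (q : ℚ) : π (MvPolynomial.C q) = algebraMap ℚ _ q := rfl
    rw [PowerSeries.coeff_mk, map_sum, hsubset] at hcoeff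
    simp only [← map_ascentProd, PowerSeries.coeff_monomial] at hcoeff
    rw [map_sum, hcoeff, map_sum]
    refine sum_congr rfl fun S _ => ?_
    rw [map_mul, map_prod, hC]
    simp only [b]
    split_ifs <;> simp [prod_mul_distrib, mul_assoc]
  have h := coeff_allOnes_eq_of_mk_eq hπ
  simp only [MvPolynomial.coeff_sum, MvPolynomial.coeff_C_mul, coeff_allOnes_prod_X] at h
  rw [h]
  simp [b]

end MultilinearCoefficient

/-! ### Labellings -/

section Labellings

open Finset

variable {Q : List Step} {n : ℕ} {a b p : ℕ}

/-- The index of the ascent of `Q` through position `p`: ascents, possibly empty ones included, are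
separated by the east steps and numbered from `0`. -/
def ascentIndex (Q : List Step) (p : ℕ) : ℕ := eastCount (Q.take p)

/-- The positions of the north steps of the ascent of `Q` of index `j`. -/
def ascent (Q : List Step) (j : ℕ) : Finset ℕ :=
  {p ∈ range Q.length | Q[p]? = some N ∧ ascentIndex Q p = j}

theorem mem_ascent {j : ℕ} : p ∈ ascent Q j ↔ Q[p]? = some N ∧ ascentIndex Q p = j := by
  rw [ascent, mem_filter, mem_range, and_iff_right_iff_imp]
  exact fun h => (List.getElem?_eq_some_iff.1 h.1).1

theorem ascentIndex_add_one_of_N (h : Q[p]? = some N) :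
    ascentIndex Q (p + 1) = ascentIndex Q p := by
  simp [ascentIndex, List.take_add_one, h]

theorem ascentIndex_add_one_of_E (h : Q[p]? = some E) :
    ascentIndex Q (p + 1) = ascentIndex Q p + 1 := by
  simp [ascentIndex, List.take_add_one, h]

theorem monotone_ascentIndex (Q : List Step) : Monotone (ascentIndex Q) :=
  monotone_nat_of_le_succ fun p => by simp [ascentIndex, List.take_add_one]

theorem ascentIndex_le_eastCount (Q : List Step) (p : ℕ) : ascentIndex Q p ≤ eastCount Q :=
  ((List.take_sublist p Q).filter _).length_le

theorem ascentIndex_eq_iff (hab : a ≤ b) (hb : b ≤ Q.length) :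
    ascentIndex Q a = ascentIndex Q b ↔ ∀ r, a ≤ r → r < b → Q[r]? = some N := by
  induction b, hab using Nat.le_induction with
  | base => simpa using fun r hr hra => absurd hr (not_le.2 hra)
  | succ b hab ih =>
    have hmono := monotone_ascentIndex Q hab
    obtain ⟨s, hs⟩ : ∃ s, Q[b]? = some s := ⟨Q[b], List.getElem?_eq_getElem hb⟩
    have hsplit : (∀ r, a ≤ r → r < b + 1 → Q[r]? = some N) ↔
        (∀ r, a ≤ r → r < b → Q[r]? = some N) ∧ Q[b]? = some N := by
      grind
    rw [hsplit, ← ih (by omega), hs]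
    cases s with
    | N => simp [ascentIndex_add_one_of_N hs]
    | E =>
      rw [ascentIndex_add_one_of_E hs]
      exact iff_of_false (by omega) (by simp)

theorem sameAscent_iff_ascentIndex_eq (ha : Q[a]? = some N) (hb : Q[b]? = some N) :
    SameAscent Q a b ↔ ascentIndex Q a = ascentIndex Q b := by
  wlog hab : a ≤ b generalizing a b
  · rw [eq_comm, ← this hb ha (by omega)]
    simp only [SameAscent, min_comm, max_comm]
  rw [ascentIndex_eq_iff hab (List.getElem?_eq_some_iff.1 hb).1.le, SameAscent, min_eq_left hab,
    max_eq_right hab]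
  grind

theorem card_filter_getElem?_eq_N (Q : List Step) :
    #{p ∈ range Q.length | Q[p]? = some N} = northCount Q := by
  induction Q with
  | nil => rfl
  | cons s w ih =>
    rw [card_filter] at ih ⊢
    rw [List.length_cons, sum_range_succ']
    cases s <;> simp [← ih]

section IsLabelling

variable {lab lab' : Fin n → ℕ}

theorem IsLabelling.exists_eq (h : IsLabelling n Q lab) (hQ : northCount Q = n)
    (hp : Q[p]? = some N) : ∃ i, lab i = p := by
  have hmem {p} : p ∈ {p ∈ range Q.length | Q[p]? = some N} ↔ Q[p]? = some N := by
    simpa using fun h => (List.getElem?_eq_some_iff.1 h).1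
  have hsub : univ.image lab ⊆ {p ∈ range Q.length | Q[p]? = some N} := by
    simpa only [image_subset_iff, hmem] using fun i _ => h.2.1 i
  have heq := eq_of_subset_of_card_le hsub (by
    rw [card_filter_getElem?_eq_N, hQ, card_image_of_injective _ h.1, card_univ, Fintype.card_fin])
  simpa using heq.symm.subset (hmem.2 hp)

theorem IsLabelling.lt_of_eq_add (h : IsLabelling n Q lab) (hQ : northCount Q = n) (d : ℕ)
    {i j : Fin n} (hij : ascentIndex Q (lab i) = ascentIndex Q (lab j))
    (hd : lab j = lab i + (d + 1)) : i < j := by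
  induction d generalizing i j with
  | zero => exact h.2.2 i j hd
  | succ d ih =>
    have hj := (List.getElem?_eq_some_iff.1 (h.2.1 j)).1
    obtain ⟨k, hk⟩ := h.exists_eq hQ
      ((ascentIndex_eq_iff (by omega) hj.le).1 hij (lab i + (d + 1)) (by omega) (by omega))
    have hik := monotone_ascentIndex Q (show lab i ≤ lab k by omega)
    have hkj := monotone_ascentIndex Q (show lab k ≤ lab j by omega)
    exact (ih (by omega) hk).trans (h.2.2 k j (by omega))

theorem IsLabelling.lt_iff_lt (h : IsLabelling n Q lab) (hQ : northCount Q = n) {i j : Fin n}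
    (hij : ascentIndex Q (lab i) = ascentIndex Q (lab j)) : lab i < lab j ↔ i < j := by
  have hlt {i j : Fin n} (hij : ascentIndex Q (lab i) = ascentIndex Q (lab j))
      (hlab : lab i < lab j) : i < j :=
    h.lt_of_eq_add hQ (lab j - lab i - 1) hij (by omega)
  refine ⟨hlt hij, fun hlt' => ?_⟩
  rcases lt_trichotomy (lab i) (lab j) with hlab | hlab | hlab
  · exact hlab
  · exact absurd (h.1 hlab) hlt'.ne
  · exact absurd (hlt hij.symm hlab) hlt'.asymm

theorem IsLabelling.card_fiber (h : IsLabelling n Q lab) (hQ : northCount Q = n) (j : ℕ) :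
    #{i | ascentIndex Q (lab i) = j} = #(ascent Q j) := by
  refine card_bij (fun i _ => lab i) ?_ (fun _ _ _ _ e => h.1 e) fun p hp => ?_
  · exact fun i hi => mem_ascent.2 ⟨h.2.1 i, (mem_filter.1 hi).2⟩
  · obtain ⟨hN, hj⟩ := mem_ascent.1 hp
    obtain ⟨i, rfl⟩ := h.exists_eq hQ hN
    exact ⟨i, by simpa using hj, rfl⟩

theorem IsLabelling.eq_of_ascentIndex_eq (h : IsLabelling n Q lab) (h' : IsLabelling n Q lab')
    (hQ : northCount Q = n) (heq : ∀ i, ascentIndex Q (lab i) = ascentIndex Q (lab' i)) :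
    lab = lab' := by
  funext i
  let fiber : Set (Fin n) := {k | ascentIndex Q (lab k) = ascentIndex Q (lab i)}
  have hmono : StrictMono fun k : fiber => lab k := fun a b hab =>
    (h.lt_iff_lt hQ (a.2.trans b.2.symm)).2 hab
  have hmono' : StrictMono fun k : fiber => lab' k := fun a b hab =>
    (h'.lt_iff_lt hQ (by rw [← heq, ← heq, a.2, b.2])).2 hab
  refine congrFun ((hmono.range_inj hmono').1 ?_) ⟨i, rfl⟩
  ext p
  constructor
  · rintro ⟨k, rfl⟩
    obtain ⟨k', hk'⟩ := h'.exists_eq hQ (h.2.1 k)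
    exact ⟨⟨k', (heq k').trans ((congrArg _ hk').trans k.2)⟩, hk'⟩
  · rintro ⟨k, rfl⟩
    obtain ⟨k', hk'⟩ := h.exists_eq hQ (h'.2.1 k)
    exact ⟨⟨k', (congrArg _ hk').trans ((heq k).symm.trans k.2)⟩, hk'⟩

end IsLabelling

theorem exists_isLabelling (g : Fin n → ℕ) (hg : ∀ j, #{i | g i = j} = #(ascent Q j)) :
    ∃ lab, IsLabelling n Q lab ∧ ∀ i, ascentIndex Q (lab i) = g i := by
  let Φ (j : ℕ) : ({i | g i = j} : Finset (Fin n)) ≃o ascent Q j :=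
    (orderIsoOfFin _ (hg j)).symm.trans (orderIsoOfFin _ rfl)
  let lab (i : Fin n) : ℕ := Φ (g i) ⟨i, by simp⟩
  have hlab {i j} (h : g i = j) : lab i = Φ j ⟨i, by simp [h]⟩ := by subst h; rfl
  have hmem (i : Fin n) : Q[lab i]? = some N ∧ ascentIndex Q (lab i) = g i :=
    mem_ascent.1 (Φ (g i) _).2
  have hlt {i j} (h : g i = g j) : lab i < lab j ↔ i < j := by
    rw [hlab h, hlab rfl, Subtype.coe_lt_coe, OrderIso.lt_iff_lt, Subtype.mk_lt_mk]
  refine ⟨lab, ⟨fun i j h => ?_, fun i => (hmem i).1, fun i j h => ?_⟩, fun i => (hmem i).2⟩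
  · have hg : g i = g j := by rw [← (hmem i).2, ← (hmem j).2, h]
    exact le_antisymm (not_lt.1 fun hij => ((hlt hg.symm).2 hij).ne' h)
      (not_lt.1 fun hij => ((hlt hg).2 hij).ne h)
  · refine (hlt ?_).1 (by omega)
    rw [← (hmem i).2, ← (hmem j).2, h, ascentIndex_add_one_of_N (hmem i).1]

end Labellings

section AscentProducts

open Finset

@[simp] theorem ascentIndex_zero (Q : List Step) : ascentIndex Q 0 = 0 := rfl

@[simp] theorem ascentIndex_N_cons_add_one (w : List Step) (p : ℕ) :
    ascentIndex (N :: w) (p + 1) = ascentIndex w p := by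
  simp [ascentIndex]

@[simp] theorem ascentIndex_E_cons_add_one (w : List Step) (p : ℕ) :
    ascentIndex (E :: w) (p + 1) = ascentIndex w p + 1 := by
  simp [ascentIndex]

theorem card_ascent_cons (s : Step) (w : List Step) (j : ℕ) : #(ascent (s :: w) j) =
    #{p ∈ range w.length | w[p]? = some N ∧ ascentIndex (s :: w) (p + 1) = j} +
      if s = N ∧ 0 = j then 1 else 0 := by
  rw [ascent, card_filter, List.length_cons, sum_range_succ', card_filter]
  simp

theorem card_ascent_N_cons_zero (w : List Step) : #(ascent (N :: w) 0) = #(ascent w 0) + 1 := by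
  rw [card_ascent_cons]
  simp [ascent]

theorem card_ascent_N_cons_add_one (w : List Step) (j : ℕ) :
    #(ascent (N :: w) (j + 1)) = #(ascent w (j + 1)) := by
  rw [card_ascent_cons]
  simp [ascent]

theorem card_ascent_E_cons_zero (w : List Step) : #(ascent (E :: w) 0) = 0 := by
  simp [card_ascent_cons]

theorem card_ascent_E_cons_add_one (w : List Step) (j : ℕ) :
    #(ascent (E :: w) (j + 1)) = #(ascent w j) := by
  rw [card_ascent_cons]
  simp [ascent]

theorem ascentProd_eq_mul_prod {M : Type*} [CommMonoid M] (g : ℕ → M) (r : ℕ) (Q : List Step) :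
    ascentProd g r Q =
      g (r + #(ascent Q 0)) * ∏ j ∈ range (eastCount Q), g #(ascent Q (j + 1)) := by
  induction Q generalizing r with
  | nil => simp [ascentProd, ascent]
  | cons s w ih =>
    cases s with
    | N =>
      simp only [ascentProd, ih, eastCount_N_cons, card_ascent_N_cons_zero,
        card_ascent_N_cons_add_one, add_assoc, add_comm 1]
    | E =>
      simp only [ascentProd, ih, eastCount_E_cons, card_ascent_E_cons_zero,
        card_ascent_E_cons_add_one, zero_add, add_zero, prod_range_succ',
        mul_comm (∏ _ ∈ range _, _)]

theorem ascentProd_zero_eq_prod {M : Type*} [CommMonoid M] (g : ℕ → M) (Q : List Step) :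
    ascentProd g 0 Q = ∏ j : Fin (eastCount Q + 1), g #(ascent Q j) := by
  rw [ascentProd_eq_mul_prod, zero_add, Fin.prod_univ_eq_prod_range fun j => g #(ascent Q j),
    prod_range_succ', mul_comm]

end AscentProducts

section CountingColourings

open Finset

theorem coeff_subsetPoly {ι R : Type*} [Fintype ι] [CommRing R] (l : ι → ℕ) (x : ι → R) (a : ℕ) :
    (subsetPoly l x).coeff a = ∑ S with ∑ c ∈ S, l c = a, ∏ c ∈ S, x c := by
  classical
  rw [subsetPoly, prod_one_add, powerset_univ, Polynomial.finsetSum_coeff, sum_filter]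
  refine sum_congr rfl fun S _ => ?_
  rw [prod_mul_distrib, prod_pow_eq_pow_sum, ← map_prod, Polynomial.coeff_C_mul_X_pow]
  simp only [eq_comm]

variable {ι J R : Type*} [Fintype ι] [DecidableEq ι] [Fintype J] [DecidableEq J] [CommRing R]

theorem card_filter_existsUnique_mem (p : (J → Finset ι) → Prop)
    [DecidablePred p] : #{φ : J → Finset ι | p φ ∧ ∀ c, #{j | c ∈ φ j} = 1} =
      #{κ : ι → J | p fun j => {c | κ c = j}} := by
  symm
  refine card_bij (fun κ _ j => {c | κ c = j}) (fun κ hκ => ?_) (fun κ _ κ' _ h => ?_)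
    fun φ hφ => ?_
  · simpa [filter_eq] using hκ
  · funext c
    have hc : c ∈ ({d | κ' d = κ c} : Finset ι) := by simp [← congrFun h (κ c)]
    exact (mem_filter.1 hc).2.symm
  · obtain ⟨hp, hone⟩ := (mem_filter.1 hφ).2
    simp only [card_eq_one] at hone
    choose κ hκ using hone
    have hfiber : (fun j => ({c | κ c = j} : Finset ι)) = φ := by
      ext j c
      simpa [eq_comm] using (Finset.ext_iff.1 (hκ c) j).symm
    exact ⟨κ, by simpa [hfiber] using hp, hfiber⟩

theorem coeff_allOnes_prod_coeff_subsetPoly (l : ι → ℕ) (a : J → ℕ) :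
    (∏ j, (subsetPoly l (MvPolynomial.X : ι → MvPolynomial ι R)).coeff (a j)).coeff (allOnes ι) =
      #{κ : ι → J | ∀ j, ∑ c with κ c = j, l c = a j} := by
  simp only [coeff_subsetPoly, prod_univ_sum, MvPolynomial.coeff_sum, coeff_allOnes_prod_prod_X]
  rw [← card_filter_existsUnique_mem fun φ : J → Finset ι => ∀ j, ∑ c ∈ φ j, l c = a j, sum_boole]
  congr 2
  ext φ
  simp

end CountingColourings

section Cycles

open Finset

variable {n : ℕ} {σ : Equiv.Perm (Fin n)}

instance : Finite (Cycles σ) := inferInstanceAs (Finite (Quotient _))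

/-- The cycle of `σ` through `i`. -/
def Cycles.mk (σ : Equiv.Perm (Fin n)) (i : Fin n) : Cycles σ :=
  Quotient.mk (Equiv.Perm.SameCycle.setoid σ) i

theorem Cycles.mk_eq_mk_iff {i j : Fin n} : mk σ i = mk σ j ↔ σ.SameCycle i j := Quotient.eq

theorem Cycles.mk_surjective : Function.Surjective (mk σ) := Quotient.exists_rep

theorem sum_cycleLen_eq_card [DecidableEq (Cycles σ)] (s : Finset (Cycles σ)) :
    ∑ c ∈ s, cycleLen σ c = #{i | Cycles.mk σ i ∈ s} := by
  have hlen (c : Cycles σ) : cycleLen σ c = #{i | Cycles.mk σ i = c} := by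
    rw [← Fintype.card_subtype, ← Nat.card_eq_fintype_card]
    rfl
  simp only [hlen, card_filter]
  rw [sum_comm]
  simp

theorem sum_cycleLen [Fintype (Cycles σ)] : ∑ c, cycleLen σ c = n := by
  classical
  simp [sum_cycleLen_eq_card]

end Cycles

section FixedLabellings

open Finset

variable {n : ℕ} {σ : Equiv.Perm (Fin n)} {Q : List Step} {lab : Fin n → ℕ}

/-- The labellings of `Q` fixed by `σ`: each cycle of `σ` labels steps of a single ascent. -/
def fixedLabellings (σ : Equiv.Perm (Fin n)) (Q : List Step) : Set (Fin n → ℕ) :=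
  {lab | IsLabelling n Q lab ∧ ∀ i j, σ.SameCycle i j → SameAscent Q (lab i) (lab j)}

theorem finite_fixedLabellings (σ : Equiv.Perm (Fin n)) (Q : List Step) :
    (fixedLabellings σ Q).Finite :=
  (Set.Finite.pi' fun _ : Fin n => Set.finite_Iio Q.length).subset fun _ h i =>
    (List.getElem?_eq_some_iff.1 (h.1.2.1 i)).1

theorem mem_fixedLabellings_iff : lab ∈ fixedLabellings σ Q ↔ IsLabelling n Q lab ∧
    ∃ κ : Cycles σ → Fin (eastCount Q + 1), ∀ i, ascentIndex Q (lab i) = κ (Cycles.mk σ i) := by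
  refine and_congr_right fun h => ?_
  simp only [sameAscent_iff_ascentIndex_eq (h.2.1 _) (h.2.1 _)]
  constructor
  · intro hσ
    exact ⟨Quotient.lift (fun i => ⟨ascentIndex Q (lab i), Nat.lt_succ_of_le
      (ascentIndex_le_eastCount Q _)⟩) fun i j hij => Fin.ext (hσ i j hij), fun i => rfl⟩
  · rintro ⟨κ, hκ⟩ i j hij
    rw [hκ, hκ, Cycles.mk_eq_mk_iff.2 hij]

variable [Fintype (Cycles σ)]

theorem exists_mem_fixedLabellings (κ : Cycles σ → Fin (eastCount Q + 1))
    (hκ : ∀ j, ∑ c with κ c = j, cycleLen σ c = #(ascent Q j)) :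
    ∃ lab ∈ fixedLabellings σ Q, ∀ i, ascentIndex Q (lab i) = κ (Cycles.mk σ i) := by
  classical
  have hcard (j : ℕ) : #{i | (κ (Cycles.mk σ i) : ℕ) = j} = #(ascent Q j) := by
    rcases lt_or_ge j (eastCount Q + 1) with hj | hj
    · simpa [sum_cycleLen_eq_card, Fin.ext_iff] using hκ ⟨j, hj⟩
    · have hempty : ascent Q j = ∅ := filter_eq_empty_iff.2 fun p _ hp =>
        hj.not_gt (Nat.lt_succ_of_le (hp.2 ▸ ascentIndex_le_eastCount Q p))
      rw [hempty, card_empty, card_eq_zero, filter_eq_empty_iff]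
      exact fun i _ => ((κ _).2.trans_le hj).ne
  obtain ⟨lab, hlab, hindex⟩ := exists_isLabelling _ hcard
  exact ⟨lab, mem_fixedLabellings_iff.2 ⟨hlab, κ, hindex⟩, hindex⟩

theorem ncard_fixedLabellings [DecidableEq (Cycles σ)] (hQ : northCount Q = n) :
    (fixedLabellings σ Q).ncard = #{κ : Cycles σ → Fin (eastCount Q + 1) |
      ∀ j, ∑ c with κ c = j, cycleLen σ c = #(ascent Q j)} := by
  choose hlab κ hκ using fun lab (h : lab ∈ fixedLabellings σ Q) => mem_fixedLabellings_iff.1 h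
  rw [← Set.ncard_coe_finset]
  refine Set.ncard_congr κ (fun lab h => ?_) (fun lab lab' h h' heq => ?_) fun κ' h => ?_
  · have hcard (j : Fin (eastCount Q + 1)) := (hlab lab h).card_fiber hQ j
    simpa [hκ _ h, sum_cycleLen_eq_card, ← Fin.ext_iff] using hcard
  · exact (hlab _ h).eq_of_ascentIndex_eq (hlab _ h') hQ fun i => by rw [hκ _ h, hκ _ h', heq]
  · obtain ⟨lab, hfix, hindex⟩ := exists_mem_fixedLabellings κ' (by simpa using h)
    refine ⟨lab, hfix, funext fun c => Fin.ext ?_⟩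
    obtain ⟨i, rfl⟩ := Cycles.mk_surjective c
    rw [← hκ _ hfix, hindex]

theorem coeff_allOnes_ascentProd (hQ : northCount Q = n) :
    (ascentProd (subsetPoly (cycleLen σ) (MvPolynomial.X : _ → MvPolynomial _ ℚ)).coeff 0 Q).coeff
      (allOnes (Cycles σ)) = (fixedLabellings σ Q).ncard := by
  classical
  rw [ascentProd_zero_eq_prod, coeff_allOnes_prod_coeff_subsetPoly, ncard_fixedLabellings hQ]
  congr

end FixedLabellings

section LabelledIntervals

theorem isLabelledTamariInterval_and_fixedBy_iff {m n : ℕ} {σ : Equiv.Perm (Fin n)}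
    {x : (List Step × List Step) × (Fin n → ℕ)} :
    IsLabelledTamariInterval m n x ∧ FixedBy x σ ↔
      x.1 ∈ intervals m 0 n ∧ x.2 ∈ fixedLabellings σ x.1.2 := by
  rw [mem_intervals]
  constructor
  · rintro ⟨⟨-, -, hQ, hn, hle, hlab⟩, hfix⟩
    exact ⟨⟨isBallot_iff_isRun.1 hQ, hn, hle⟩, hlab, hfix⟩
  · rintro ⟨⟨hQ, hn, hle⟩, hlab, hfix⟩
    exact ⟨⟨isBallot_iff_isRun.2 (hle.isRun hQ), hle.northCount_eq.trans hn,
      isBallot_iff_isRun.2 hQ, hn, hle, hlab⟩, hfix⟩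

theorem card_fixed_eq_sum_ncard_fixedLabellings (m n : ℕ) (σ : Equiv.Perm (Fin n)) :
    Nat.card {x : (List Step × List Step) × (Fin n → ℕ) //
        IsLabelledTamariInterval m n x ∧ FixedBy x σ} =
      ∑ p ∈ intervals m 0 n, (fixedLabellings σ p.2).ncard := by
  have hfin (p : intervals m 0 n) : Finite (fixedLabellings σ p.1.2) :=
    finite_fixedLabellings σ p.1.2
  rw [← Finset.sum_coe_sort (intervals m 0 n) fun p => (fixedLabellings σ p.2).ncard]
  simp only [← Nat.card_coe_set_eq]
  rw [← Nat.card_sigma]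
  refine Nat.card_congr ((Equiv.subtypeEquivRight fun _ =>
    isLabelledTamariInterval_and_fixedBy_iff).trans ?_)
  exact ⟨fun x => ⟨⟨x.1.1, x.2.1⟩, ⟨x.1.2, x.2.2⟩⟩, fun y => ⟨(y.1.1, y.2.1), y.1.2, y.2.2⟩,
    fun _ => rfl, fun _ => rfl⟩

end LabelledIntervals

/-- **(Bergeron–Préville-Ratelle conjecture; Bousquet-Mélou, Chapuy, Préville-Ratelle.)**
Fix `m ≥ 1`, `n ≥ 1` and a permutation `σ ∈ S_n` of cycle type `λ = (λ_1, …, λ_ℓ)`.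
The number of labelled `m`-Tamari intervals of size `n` fixed under the action of `σ`
equals `(mn+1)^{ℓ−2} ∏_{i=1}^{ℓ} binom((m+1)λ_i, λ_i)`, an identity in `ℚ`. -/
theorem card_fixed_labelled_tamari_intervals (m n : ℕ) (hm : 1 ≤ m) (hn : 1 ≤ n)
    (σ : Equiv.Perm (Fin n)) :
    (Nat.card {x : (List Step × List Step) × (Fin n → ℕ) //
        IsLabelledTamariInterval m n x ∧ FixedBy x σ} : ℚ)
      = (m * n + 1 : ℚ) ^ ((numCycles σ : ℤ) - 2)
        * ∏ᶠ c : Cycles σ,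
            (Nat.choose ((m + 1) * cycleLen σ c) (cycleLen σ c) : ℚ) := by
  classical
  have := Fintype.ofFinite (Cycles σ)
  calc (Nat.card _ : ℚ)
      = ∑ p ∈ intervals m 0 n, ((fixedLabellings σ p.2).ncard : ℚ) := by
        rw [card_fixed_eq_sum_ncard_fixedLabellings, Nat.cast_sum]
    _ = ∑ p ∈ intervals m 0 n, (ascentProd (subsetPoly (cycleLen σ)
          (MvPolynomial.X : _ → MvPolynomial _ ℚ)).coeff 0 p.2).coeff (allOnes (Cycles σ)) :=
        Finset.sum_congr rfl fun p hp => (coeff_allOnes_ascentProd (mem_intervals.1 hp).2.1).symm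
    _ = (1 + m * n) ^ ((Fintype.card (Cycles σ) : ℤ) - 2) *
          ∏ c, (((m + 1) * cycleLen σ c).choose (cycleLen σ c) : ℚ) := by
        simpa only [sum_cycleLen] using sum_coeff_allOnes_ascentProd (by omega) (cycleLen σ)
    _ = _ := by
        rw [numCycles, Nat.card_eq_fintype_card, finprod_eq_prod_of_fintype, add_comm]
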